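/- arXiv:1704.05377 — 3 statements merged into one kernel-verified Lean document; each statement's English description precedes it below -/
import Mathlib

section
/- Suppose M₀ ≠ ∅. Then Problem 2 is solvable if and only if ψ_n = 0 for every n ∈ M₀. In that case the set of solutions consists exactly of those f ∈ C¹([0,π]) with f(0) = f(π) = 0 whose sine coefficients satisfy f_n = ψ_n/Λ_n for all n ∉ M₀, while f_n for n ∈ M₀ are arbitrary. -/
open Real Set

noncomputable section

/-- Mean value of a function over the period `[0, 2π]`. -/
def pmean (g : ℝ → ℝ) : ℝ := (2 * π)⁻¹ * ∫ τ in (0:ℝ)..(2 * π), g τ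

/-- `u` is a classical solution of `∂u/∂t = ∂²u/∂x² + F(x,t)` in `Π = (0,π)×(0,T)`
vanishing on the parabolic boundary `Γ`. -/
def IsClassicalSolution (T : ℝ) (F : ℝ → ℝ → ℝ) (u : ℝ → ℝ → ℝ) : Prop :=
  ContinuousOn (fun p : ℝ × ℝ => u p.1 p.2) (Icc 0 π ×ˢ Icc 0 T) ∧
  (∀ x ∈ Icc (0:ℝ) π, u x 0 = 0) ∧
  (∀ t ∈ Icc (0:ℝ) T, u 0 t = 0 ∧ u π t = 0) ∧
  ∃ ut ux uxx : ℝ → ℝ → ℝ,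
    ContinuousOn (fun p : ℝ × ℝ => ut p.1 p.2) (Ioo 0 π ×ˢ Ioo 0 T) ∧
    ContinuousOn (fun p : ℝ × ℝ => uxx p.1 p.2) (Ioo 0 π ×ˢ Ioo 0 T) ∧
    ∀ x ∈ Ioo (0:ℝ) π, ∀ t ∈ Ioo (0:ℝ) T,
      HasDerivAt (fun t' => u x t') (ut x t) t ∧
      HasDerivAt (fun x' => u x' t) (ux x t) x ∧
      HasDerivAt (fun x' => ux x' t) (uxx x t) x ∧
      ut x t = uxx x t + F x t

/-- `f` is of class `C¹` on `[0,π]`. -/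
def IsC1 (f : ℝ → ℝ) : Prop :=
  ∃ f' : ℝ → ℝ, ContinuousOn f' (Icc 0 π) ∧
    ∀ x ∈ Icc (0:ℝ) π, HasDerivWithinAt f (f' x) (Icc 0 π) x

/-- `f` solves Problem 2: `f ∈ C¹([0,π])`, `f(0) = f(π) = 0`, and for any family of
classical solutions `u_ω` of the problem with source `f(x) r(t,ωt)` one has
`‖u_ω(·,t₀) − ψ‖_{C([0,π])} → 0` as `ω → ∞`. -/
def SolvesProblem2 (T t₀ : ℝ) (r0 : ℝ → ℝ) (r1 : ℝ → ℝ → ℝ) (ψ : ℝ → ℝ)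
    (f : ℝ → ℝ) : Prop :=
  IsC1 f ∧ f 0 = 0 ∧ f π = 0 ∧
  ∀ u : ℝ → ℝ → ℝ → ℝ,
    (∀ ω : ℝ, 1 ≤ ω →
      IsClassicalSolution T (fun x t => f x * (r0 t + r1 t (ω * t))) (u ω)) →
    ∀ ε > 0, ∃ ω₀ ≥ (1:ℝ), ∀ ω ≥ ω₀, ∀ x ∈ Icc (0:ℝ) π, |u ω x t₀ - ψ x| ≤ ε

/-!
By the maximum principle the classical solution `u_ω` is unique. It is therefore the sine series
`∑ f_n (∫₀ᵗ e^{-n²(t-s)} r(s, ωs) ds) sin nx`. As `ω → ∞` the zero-mean oscillation `r₁` averages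
out, uniformly in `x`, since the Duhamel integrals are bounded uniformly in `n` and `ω` and the
sine coefficients of a `C¹` function vanishing at `0` and `π` are absolutely summable. So
`u_ω(·, t₀) → ∑ f_n Λ_n sin nx`, and by completeness of the sines `f` is a solution exactly when
`ψ_n = f_n Λ_n` for all `n ≥ 1`.

If `ψ_n = 0` whenever `Λ_n = 0`, these equations have the formal solution `∑ (ψ_n / Λ_n) sin nx`.
Because `n² Λ_n → r₀(t₀) ≠ 0` and the `n⁴ ψ_n` are the square-summable sine coefficients of `ψ⁗`,
the series `∑ n |ψ_n / Λ_n|` converges, so this formal solution is a `C¹` function.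
-/

open Filter Topology MeasureTheory

/-! ### The maximum principle and uniqueness of classical solutions -/

lemma nonpos_of_forall_pos_le_mul {a b : ℝ} (h : ∀ ε > 0, a ≤ ε * b) : a ≤ 0 := by
  have hlim : Tendsto (fun ε => ε * b) (𝓝[>] 0) (𝓝 0) := by
    simpa using ((continuous_mul_const b).tendsto 0).mono_left nhdsWithin_le_nhds
  exact ge_of_tendsto hlim (eventually_mem_nhdsWithin.mono h)

lemma second_deriv_nonpos_of_isLocalMax {f f' : ℝ → ℝ} {f'' x : ℝ} (hmax : IsLocalMax f x)
    (hf : ∀ᶠ y in 𝓝 x, HasDerivAt f (f' y) y) (hf' : HasDerivAt f' f'' x) : f'' ≤ 0 := by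
  by_contra! hpos
  have hderiv : deriv f =ᶠ[𝓝 x] f' := hf.mono fun y hy => hy.deriv
  have hderiv2 : deriv (deriv f) x = f'' := hderiv.deriv_eq.trans hf'.deriv
  have hmin : IsLocalMin f x :=
    isLocalMin_of_deriv_deriv_pos (hderiv2.symm ▸ hpos) hmax.deriv_eq_zero
      hf.self_of_nhds.continuousAt
  have hconst : f =ᶠ[𝓝 x] fun _ => f x :=
    (hmax.and hmin).mono fun y hy => le_antisymm hy.1 hy.2
  have hzero : deriv f =ᶠ[𝓝 x] fun _ => 0 := by simpa using hconst.deriv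
  have : f'' = 0 := by rw [← hderiv2, hzero.deriv_eq, deriv_const]
  exact hpos.ne' this

lemma deriv_nonneg_of_eventually_le_left {f : ℝ → ℝ} {f' x : ℝ} (hf : HasDerivAt f f' x)
    (hle : ∀ᶠ y in 𝓝[<] x, f y ≤ f x) : 0 ≤ f' := by
  have hslope : Tendsto (slope f x) (𝓝[<] x) (𝓝 f') :=
    (hasDerivWithinAt_iff_tendsto_slope' self_notMem_Iio).1 hf.hasDerivWithinAt
  refine ge_of_tendsto hslope ?_
  filter_upwards [hle, self_mem_nhdsWithin] with y hy hyx
  rw [slope_def_field]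
  exact div_nonneg_of_nonpos (sub_nonpos.2 hy) (sub_nonpos.2 (le_of_lt hyx))

section MaximumPrinciple

variable {a b T : ℝ} {w wt wx wxx : ℝ → ℝ → ℝ}

lemma heat_strict_subsolution_nonpos
    (hc : ContinuousOn (fun p : ℝ × ℝ => w p.1 p.2) (Icc a b ×ˢ Icc 0 T))
    (hinit : ∀ x ∈ Icc a b, w x 0 ≤ 0) (hleft : ∀ t ∈ Icc 0 T, w a t ≤ 0)
    (hright : ∀ t ∈ Icc 0 T, w b t ≤ 0)
    (hwt : ∀ x ∈ Ioo a b, ∀ t ∈ Ioc 0 T, HasDerivAt (fun s => w x s) (wt x t) t)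
    (hwx : ∀ x ∈ Ioo a b, ∀ t ∈ Ioc 0 T, HasDerivAt (fun y => w y t) (wx x t) x)
    (hwxx : ∀ x ∈ Ioo a b, ∀ t ∈ Ioc 0 T, HasDerivAt (fun y => wx y t) (wxx x t) x)
    (hlt : ∀ x ∈ Ioo a b, ∀ t ∈ Ioc 0 T, wt x t < wxx x t) :
    ∀ x ∈ Icc a b, ∀ t ∈ Icc 0 T, w x t ≤ 0 := by
  intro x hx t ht
  obtain ⟨⟨y, s⟩, ⟨hy, hs⟩, hmax⟩ :=
    (isCompact_Icc.prod isCompact_Icc).exists_isMaxOn ⟨(x, t), hx, ht⟩ hc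
  have hle : ∀ x ∈ Icc a b, ∀ t ∈ Icc 0 T, w x t ≤ w y s :=
    fun x hx t ht => hmax (mk_mem_prod hx ht)
  refine (hle x hx t ht).trans ?_
  by_contra! hpos
  have hs' : s ∈ Ioc 0 T :=
    ⟨hs.1.lt_of_ne fun h : 0 = s => hpos.not_ge (h ▸ hinit y hy), hs.2⟩
  have hy' : y ∈ Ioo a b :=
    ⟨hy.1.lt_of_ne fun h : a = y => hpos.not_ge (h ▸ hleft s hs),
      hy.2.lt_of_ne fun h : y = b => hpos.not_ge (h ▸ hright s hs)⟩
  have ht_nonneg : 0 ≤ wt y s :=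
    deriv_nonneg_of_eventually_le_left (hwt y hy' s hs') <| by
      filter_upwards [Ioo_mem_nhdsLT hs'.1] with t ht
      exact hle y hy t ⟨ht.1.le, ht.2.le.trans hs.2⟩
  have hxx_nonpos : wxx y s ≤ 0 := by
    refine second_deriv_nonpos_of_isLocalMax (f := fun x => w x s) ?_ ?_ (hwxx y hy' s hs')
    · filter_upwards [Icc_mem_nhds hy'.1 hy'.2] with x hx using hle x hx s hs
    · filter_upwards [Ioo_mem_nhds hy'.1 hy'.2] with x hx using hwx x hx s hs'
  linarith [hlt y hy' s hs']

lemma heat_subsolution_nonpos (hT : 0 < T)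
    (hc : ContinuousOn (fun p : ℝ × ℝ => w p.1 p.2) (Icc a b ×ˢ Icc 0 T))
    (hinit : ∀ x ∈ Icc a b, w x 0 ≤ 0) (hleft : ∀ t ∈ Icc 0 T, w a t ≤ 0)
    (hright : ∀ t ∈ Icc 0 T, w b t ≤ 0)
    (hwt : ∀ x ∈ Ioo a b, ∀ t ∈ Ioo 0 T, HasDerivAt (fun s => w x s) (wt x t) t)
    (hwx : ∀ x ∈ Ioo a b, ∀ t ∈ Ioo 0 T, HasDerivAt (fun y => w y t) (wx x t) x)
    (hwxx : ∀ x ∈ Ioo a b, ∀ t ∈ Ioo 0 T, HasDerivAt (fun y => wx y t) (wxx x t) x)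
    (hle : ∀ x ∈ Ioo a b, ∀ t ∈ Ioo 0 T, wt x t ≤ wxx x t) :
    ∀ x ∈ Icc a b, ∀ t ∈ Icc 0 T, w x t ≤ 0 := by
  intro x hx
  have hlt : ∀ t ∈ Ico 0 T, w x t ≤ 0 := by
    intro t ht
    have hIcc : Icc 0 t ⊆ Icc 0 T := Icc_subset_Icc_right ht.2.le
    have hIoc : Ioc 0 t ⊆ Ioo 0 T := fun s hs => ⟨hs.1, hs.2.trans_lt ht.2⟩
    refine nonpos_of_forall_pos_le_mul (b := t) fun ε hε => ?_
    refine sub_nonpos.1 (heat_strict_subsolution_nonpos (w := fun x t => w x t - ε * t)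
      (wt := fun x t => wt x t - ε * 1) (wx := wx) (wxx := wxx)
      ((hc.mono (prod_mono_right hIcc)).sub (by fun_prop)) (fun y hy => ?_) (fun s hs => ?_)
      (fun s hs => ?_) (fun y hy s hs => ?_) (fun y hy s hs => ?_) (fun y hy s hs => ?_)
      (fun y hy s hs => ?_) x hx t ⟨ht.1, le_rfl⟩)
    · simpa using hinit y hy
    · nlinarith [hleft s (hIcc hs), hs.1]
    · nlinarith [hright s (hIcc hs), hs.1]
    · exact (hwt y hy s (hIoc hs)).sub ((hasDerivAt_id s).const_mul ε)
    · exact (hwx y hy s (hIoc hs)).sub_const _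
    · exact hwxx y hy s (hIoc hs)
    · linarith [hle y hy s (hIoc hs)]
  have hcx : ContinuousOn (fun t => w x t) (closure (Ico 0 T)) := by
    rw [closure_Ico hT.ne]
    exact hc.comp (f := fun t => (x, t)) (by fun_prop) fun t ht => ⟨hx, ht⟩
  intro t ht
  rw [← closure_Ico hT.ne] at ht
  exact le_on_closure hlt hcx continuousOn_const ht

end MaximumPrinciple

lemma IsClassicalSolution.le_of_source_le {T : ℝ} (hT : 0 < T) {F G u v : ℝ → ℝ → ℝ}
    (hu : IsClassicalSolution T F u) (hv : IsClassicalSolution T G v)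
    (hFG : ∀ x ∈ Ioo 0 π, ∀ t ∈ Ioo 0 T, F x t ≤ G x t) :
    ∀ x ∈ Icc 0 π, ∀ t ∈ Icc 0 T, u x t ≤ v x t := by
  obtain ⟨hu_cont, hu_init, hu_lat, ut, ux, uxx, -, -, hu_eq⟩ := hu
  obtain ⟨hv_cont, hv_init, hv_lat, vt, vx, vxx, -, -, hv_eq⟩ := hv
  intro x hx t ht
  refine sub_nonpos.1 (heat_subsolution_nonpos (w := fun x t => u x t - v x t)
    (wt := fun x t => ut x t - vt x t) (wx := fun x t => ux x t - vx x t)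
    (wxx := fun x t => uxx x t - vxx x t) hT (hu_cont.sub hv_cont) ?_ ?_ ?_ ?_ ?_ ?_ ?_ x hx t ht)
  · intro y hy
    simp only [hu_init y hy, hv_init y hy, sub_self, le_refl]
  · intro s hs
    simp only [(hu_lat s hs).1, (hv_lat s hs).1, sub_self, le_refl]
  · intro s hs
    simp only [(hu_lat s hs).2, (hv_lat s hs).2, sub_self, le_refl]
  · exact fun y hy s hs => (hu_eq y hy s hs).1.sub (hv_eq y hy s hs).1
  · exact fun y hy s hs => (hu_eq y hy s hs).2.1.sub (hv_eq y hy s hs).2.1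
  · exact fun y hy s hs => (hu_eq y hy s hs).2.2.1.sub (hv_eq y hy s hs).2.2.1
  · intro y hy s hs
    linarith [(hu_eq y hy s hs).2.2.2, (hv_eq y hy s hs).2.2.2, hFG y hy s hs]

lemma IsClassicalSolution.unique {T : ℝ} (hT : 0 < T) {F u v : ℝ → ℝ → ℝ}
    (hu : IsClassicalSolution T F u) (hv : IsClassicalSolution T F v) :
    ∀ x ∈ Icc 0 π, ∀ t ∈ Icc 0 T, u x t = v x t :=
  fun x hx t ht => le_antisymm
    (hu.le_of_source_le hT hv (fun _ _ _ _ => le_rfl) x hx t ht)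
    (hv.le_of_source_le hT hu (fun _ _ _ _ => le_rfl) x hx t ht)

/-! ### Fourier coefficients on `[0, π]` -/

lemma summable_sq_integral_mul_of_orthogonal {α ι : Type*} [MeasurableSpace α] {μ : Measure α}
    {φ : ι → α → ℝ} {g : α → ℝ} {c : ℝ} (hc : 0 < c) (hφ : ∀ i, MemLp (φ i) 2 μ)
    (hg : MemLp g 2 μ) (horth : Pairwise fun i j => ∫ x, φ i x * φ j x ∂μ = 0)
    (hnorm : ∀ i, ∫ x, φ i x * φ i x ∂μ = c) :
    Summable fun i => (∫ x, g x * φ i x ∂μ) ^ 2 := by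
  have hinner : ∀ {f h : α → ℝ} (hf : MemLp f 2 μ) (hh : MemLp h 2 μ),
      inner ℝ hf.toLp hh.toLp = ∫ x, h x * f x ∂μ := by
    intro f h hf hh
    rw [L2.inner_def]
    refine integral_congr_ae ?_
    filter_upwards [hf.coeFn_toLp, hh.coeFn_toLp] with x hfx hhx
    rw [hfx, hhx, RCLike.inner_apply, conj_trivial]
  have hsqrt : (√c)⁻¹ * (√c)⁻¹ = c⁻¹ := by rw [← mul_inv, mul_self_sqrt hc.le]
  have hortho : Orthonormal ℝ fun i => (√c)⁻¹ • (hφ i).toLp := by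
    classical
    rw [orthonormal_iff_ite]
    intro i j
    rw [real_inner_smul_left, real_inner_smul_right, hinner, ← mul_assoc, hsqrt]
    split_ifs with hij
    · rw [hij, hnorm, inv_mul_cancel₀ hc.ne']
    · rw [horth (Ne.symm hij), mul_zero]
  refine (hortho.inner_products_summable hg.toLp).mul_left c |>.congr fun i => ?_
  rw [real_inner_smul_left, hinner, norm_eq_abs, sq_abs, mul_pow, sq, hsqrt,
    mul_inv_cancel_left₀ hc.ne']

/-- The `n`-th Fourier sine coefficient of `f` on `[0, π]`. -/
def sineCoeff (f : ℝ → ℝ) (n : ℕ) : ℝ := (2 / π) * ∫ s in (0 : ℝ)..π, f s * sin ((n : ℝ) * s)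

/-- The `n`-th Fourier cosine coefficient of `f` on `[0, π]`, with the normalisation of the
coefficients of positive index used for `n = 0` as well. -/
def cosineCoeff (f : ℝ → ℝ) (n : ℕ) : ℝ := (2 / π) * ∫ s in (0 : ℝ)..π, f s * cos ((n : ℝ) * s)

@[simp]
lemma sineCoeff_zero (f : ℝ → ℝ) : sineCoeff f 0 = 0 := by simp [sineCoeff]

lemma sineCoeff_congr {f g : ℝ → ℝ} (h : EqOn f g (Icc 0 π)) (n : ℕ) :
    sineCoeff f n = sineCoeff g n := by
  refine congrArg ((2 / π) * ·) (intervalIntegral.integral_congr fun s hs => ?_)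
  rw [uIcc_of_le pi_pos.le] at hs
  simp only [h hs]

lemma integral_cos_int_mul {k : ℤ} (hk : k ≠ 0) : ∫ x in (0 : ℝ)..π, cos (k * x) = 0 := by
  rw [intervalIntegral.integral_comp_mul_left _ (Int.cast_ne_zero.2 hk)]
  simp [sin_int_mul_pi]

lemma integral_cos_sub_nat_mul (m n : ℕ) :
    ∫ x in (0 : ℝ)..π, cos (m * x - n * x) = if m = n then π else 0 := by
  split_ifs with hmn
  · simp [hmn]
  · simpa [sub_mul] using integral_cos_int_mul (k := m - n) (by lia)

lemma integral_cos_add_nat_mul (m : ℕ) {n : ℕ} (hn : n ≠ 0) :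
    ∫ x in (0 : ℝ)..π, cos (m * x + n * x) = 0 := by
  simpa [add_mul] using integral_cos_int_mul (k := m + n) (by lia)

lemma integral_sin_mul_sin (m : ℕ) {n : ℕ} (hn : n ≠ 0) :
    ∫ x in (0 : ℝ)..π, sin (m * x) * sin (n * x) = if m = n then π / 2 else 0 := by
  have hprod : ∀ x : ℝ, sin (m * x) * sin (n * x) =
      (cos (m * x - n * x) - cos (m * x + n * x)) / 2 := fun x => by
    rw [cos_sub, cos_add]; ring
  simp_rw [hprod]
  rw [intervalIntegral.integral_div, intervalIntegral.integral_sub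
    (Continuous.intervalIntegrable (by fun_prop) _ _)
    (Continuous.intervalIntegrable (by fun_prop) _ _),
    integral_cos_sub_nat_mul, integral_cos_add_nat_mul m hn, sub_zero, ite_div, zero_div]

lemma integral_cos_mul_cos (m : ℕ) {n : ℕ} (hn : n ≠ 0) :
    ∫ x in (0 : ℝ)..π, cos (m * x) * cos (n * x) = if m = n then π / 2 else 0 := by
  have hprod : ∀ x : ℝ, cos (m * x) * cos (n * x) =
      (cos (m * x - n * x) + cos (m * x + n * x)) / 2 := fun x => by
    rw [cos_sub, cos_add]; ring
  simp_rw [hprod]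
  rw [intervalIntegral.integral_div, intervalIntegral.integral_add
    (Continuous.intervalIntegrable (by fun_prop) _ _)
    (Continuous.intervalIntegrable (by fun_prop) _ _),
    integral_cos_sub_nat_mul, integral_cos_add_nat_mul m hn, add_zero, ite_div, zero_div]

lemma summable_sq_fourierCoeff_of_orthogonal {φ : ℕ → ℝ → ℝ} {g : ℝ → ℝ}
    (hφ : ∀ n, Continuous (φ n)) (hg : ContinuousOn g (Icc 0 π))
    (horth : ∀ m n, n ≠ 0 → ∫ x in (0 : ℝ)..π, φ m x * φ n x = if m = n then π / 2 else 0) :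
    Summable fun n => ((2 / π) * ∫ x in (0 : ℝ)..π, g x * φ n x) ^ 2 := by
  have hL2 : ∀ {f : ℝ → ℝ}, ContinuousOn f (Icc 0 π) → MemLp f 2 (volume.restrict (Ioc 0 π)) :=
    fun hf => (memLp_two_iff_integrable_sq
      ((hf.mono Ioc_subset_Icc_self).aestronglyMeasurable measurableSet_Ioc)).2
      ((hf.pow 2).integrableOn_Icc.mono_set Ioc_subset_Icc_self)
  simp_rw [intervalIntegral.integral_of_le pi_pos.le] at horth ⊢
  refine (summable_nat_add_iff 1).1 ?_
  simp_rw [mul_pow]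
  refine (summable_sq_integral_mul_of_orthogonal (c := π / 2) (by positivity)
    (fun n => hL2 (hφ (n + 1)).continuousOn) (hL2 hg) (fun m n hmn => ?_) fun n => ?_).mul_left _
  · beta_reduce
    rw [horth _ _ n.succ_ne_zero, if_neg (by lia)]
  · rw [horth _ _ n.succ_ne_zero, if_pos rfl]

lemma summable_sq_sineCoeff {g : ℝ → ℝ} (hg : ContinuousOn g (Icc 0 π)) :
    Summable fun n => sineCoeff g n ^ 2 :=
  summable_sq_fourierCoeff_of_orthogonal (fun _ => by fun_prop) hg
    fun m _ hn => integral_sin_mul_sin m hn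

lemma summable_sq_cosineCoeff {g : ℝ → ℝ} (hg : ContinuousOn g (Icc 0 π)) :
    Summable fun n => cosineCoeff g n ^ 2 :=
  summable_sq_fourierCoeff_of_orthogonal (fun _ => by fun_prop) hg
    fun m _ hn => integral_cos_mul_cos m hn

section IntegrationByParts

variable {g g' : ℝ → ℝ}

lemma nat_mul_sineCoeff (hg : ∀ x ∈ Icc 0 π, HasDerivWithinAt g (g' x) (Icc 0 π) x)
    (hg' : IntervalIntegrable g' volume 0 π) (h0 : g 0 = 0) (hπ : g π = 0) (n : ℕ) :
    n * sineCoeff g n = cosineCoeff g' n := by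
  have hcos : ∀ x ∈ uIcc 0 π,
      HasDerivWithinAt (fun x => cos (n * x)) (-(n * sin (n * x))) (uIcc 0 π) x := fun x _ => by
    simpa [mul_comm] using ((hasDerivAt_id x).const_mul (n : ℝ)).cos.hasDerivWithinAt
  have hparts := intervalIntegral.integral_mul_deriv_eq_deriv_mul_of_hasDerivWithinAt hcos
    (by rwa [uIcc_of_le pi_pos.le]) (Continuous.intervalIntegrable (by fun_prop) _ _) hg'
  simp only [h0, hπ, mul_zero, sub_zero, zero_sub, neg_mul, intervalIntegral.integral_neg,
    neg_neg, mul_assoc, intervalIntegral.integral_const_mul] at hparts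
  simp only [sineCoeff, cosineCoeff, mul_comm (g _), mul_comm (g' _), hparts]
  ring

lemma nat_mul_cosineCoeff (hg : ∀ x ∈ Icc 0 π, HasDerivWithinAt g (g' x) (Icc 0 π) x)
    (hg' : IntervalIntegrable g' volume 0 π) (n : ℕ) :
    n * cosineCoeff g n = -sineCoeff g' n := by
  have hsin : ∀ x ∈ uIcc 0 π,
      HasDerivWithinAt (fun x => sin (n * x)) (n * cos (n * x)) (uIcc 0 π) x := fun x _ => by
    simpa [mul_comm] using ((hasDerivAt_id x).const_mul (n : ℝ)).sin.hasDerivWithinAt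
  have hparts := intervalIntegral.integral_mul_deriv_eq_deriv_mul_of_hasDerivWithinAt hsin
    (by rwa [uIcc_of_le pi_pos.le]) (Continuous.intervalIntegrable (by fun_prop) _ _) hg'
  simp only [sin_nat_mul_pi, zero_mul, mul_zero, sin_zero, sub_zero, zero_sub, mul_assoc,
    intervalIntegral.integral_const_mul] at hparts
  simp only [sineCoeff, cosineCoeff, mul_comm (g _), mul_comm (g' _), hparts]
  ring

end IntegrationByParts

lemma summable_abs_div_nat_of_summable_sq {d : ℕ → ℝ} (hd : Summable fun n => d n ^ 2) :
    Summable fun n : ℕ => |d n| / n := by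
  have hinv : Summable fun n : ℕ => ((n : ℝ)⁻¹) ^ 2 := by simp
  refine .of_nonneg_of_le (fun n => by positivity) (fun n => ?_) (hd.add hinv)
  have hamgm := two_mul_le_add_sq |d n| (n : ℝ)⁻¹
  have hnonneg : 0 ≤ |d n| / n := by positivity
  rw [sq_abs] at hamgm
  rw [div_eq_mul_inv] at hnonneg ⊢
  linarith

lemma IsC1.summable_abs_sineCoeff {f : ℝ → ℝ} (hf : IsC1 f) (h0 : f 0 = 0) (hπ : f π = 0) :
    Summable fun n => |sineCoeff f n| := by
  obtain ⟨f', hf'_cont, hf'⟩ := hf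
  refine (summable_abs_div_nat_of_summable_sq (summable_sq_cosineCoeff hf'_cont)).congr
    fun n => ?_
  rcases eq_or_ne n 0 with rfl | hn
  · simp
  · rw [← nat_mul_sineCoeff hf' (hf'_cont.intervalIntegrable_of_Icc pi_pos.le) h0 hπ, abs_mul,
      Nat.abs_cast, mul_div_cancel_left₀ _ (Nat.cast_ne_zero.2 hn)]

lemma eqOn_zero_of_forall_integral_mul_polynomial_eq_zero {a b : ℝ} (hab : a < b) {k : ℝ → ℝ}
    (hk : ContinuousOn k (Icc a b))
    (hmoment : ∀ p : Polynomial ℝ, ∫ x in a..b, k x * p.eval x = 0) : EqOn k 0 (Icc a b) := by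
  have hint : ∀ {g : ℝ → ℝ}, ContinuousOn g (Icc a b) → IntervalIntegrable g volume a b :=
    fun hg => hg.intervalIntegrable_of_Icc hab.le
  have happrox : ∀ ε > 0, ∫ x in a..b, k x * k x ≤ ε * ∫ x in a..b, |k x| := by
    intro ε hε
    obtain ⟨p, hp⟩ := exists_polynomial_near_of_continuousOn a b k hk ε hε
    calc ∫ x in a..b, k x * k x
        = ∫ x in a..b, (k x * k x - k x * p.eval x) := by
          rw [intervalIntegral.integral_sub (hint (by fun_prop)) (hint (by fun_prop)), hmoment,
            sub_zero]
      _ ≤ ∫ x in a..b, ε * |k x| := by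
          refine intervalIntegral.integral_mono_on hab.le (hint (by fun_prop))
            (hint (by fun_prop)) fun x hx => ?_
          rw [← mul_sub, mul_comm ε]
          refine (le_abs_self _).trans ?_
          rw [abs_mul, abs_sub_comm]
          gcongr
          exact (hp x hx).le
      _ = ε * ∫ x in a..b, |k x| := intervalIntegral.integral_const_mul _ _
  intro x hx
  by_contra hne
  have hpos : 0 < ∫ x in a..b, k x * k x :=
    intervalIntegral.integral_pos hab (hk.mul hk) (fun x _ => mul_self_nonneg _)
      ⟨x, hx, mul_self_pos.2 hne⟩
  exact hpos.not_ge (nonpos_of_forall_pos_le_mul happrox)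

lemma sineCoeff_sub {f g : ℝ → ℝ} (hf : ContinuousOn f (Icc 0 π)) (hg : ContinuousOn g (Icc 0 π))
    (n : ℕ) : sineCoeff (f - g) n = sineCoeff f n - sineCoeff g n := by
  simp only [sineCoeff, Pi.sub_apply, sub_mul]
  rw [intervalIntegral.integral_sub, mul_sub] <;>
    exact ContinuousOn.intervalIntegrable_of_Icc pi_pos.le (by fun_prop)

lemma integral_mul_sin_mul_polynomial_cos_eq_zero {h : ℝ → ℝ} (hh : ContinuousOn h (Icc 0 π))
    (hcoeff : ∀ n, sineCoeff h n = 0) (p : Polynomial ℝ) (n : ℕ) :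
    ∫ x in (0 : ℝ)..π, h x * sin (n * x) * p.eval (cos x) = 0 := by
  have hint : ∀ {g : ℝ → ℝ}, ContinuousOn g (Icc 0 π) → IntervalIntegrable g volume 0 π :=
    fun hg => hg.intervalIntegrable_of_Icc pi_pos.le
  induction p using Polynomial.induction_on generalizing n with
  | C a =>
    have hzero : ∫ x in (0 : ℝ)..π, h x * sin (n * x) = 0 :=
      (mul_eq_zero.1 (hcoeff n)).resolve_left (by positivity)
    simp only [Polynomial.eval_C, intervalIntegral.integral_mul_const, hzero, zero_mul]
  | add p q hp hq =>
    simp only [Polynomial.eval_add, mul_add]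
    rw [intervalIntegral.integral_add (hint (by fun_prop)) (hint (by fun_prop)), hp, hq, add_zero]
  | monomial k a ih =>
    rcases n with - | n
    · simp
    have hprod : ∀ x : ℝ, h x * sin ((n + 1 : ℕ) * x) *
        (Polynomial.C a * Polynomial.X ^ (k + 1)).eval (cos x) =
        2⁻¹ * (h x * sin ((n + 2 : ℕ) * x) * (Polynomial.C a * Polynomial.X ^ k).eval (cos x) +
          h x * sin (n * x) * (Polynomial.C a * Polynomial.X ^ k).eval (cos x)) := by
      intro x
      have hup : ((n + 2 : ℕ) : ℝ) * x = (n + 1 : ℕ) * x + x := by push_cast; ring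
      have hdown : (n : ℝ) * x = (n + 1 : ℕ) * x - x := by push_cast; ring
      rw [hup, hdown, sin_add, sin_sub]
      simp only [Polynomial.eval_mul, Polynomial.eval_C, Polynomial.eval_pow, Polynomial.eval_X]
      ring
    simp only [hprod]
    rw [intervalIntegral.integral_const_mul, intervalIntegral.integral_add (hint (by fun_prop))
      (hint (by fun_prop)), ih, ih, add_zero, mul_zero]

lemma eqOn_zero_of_sineCoeff_eq_zero {h : ℝ → ℝ} (hh : ContinuousOn h (Icc 0 π))
    (hcoeff : ∀ n, sineCoeff h n = 0) : EqOn h 0 (Icc 0 π) := by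
  have harccos : ContinuousOn (fun y => h (arccos y)) (Icc (-1) 1) :=
    hh.comp continuous_arccos.continuousOn fun y _ => ⟨arccos_nonneg y, arccos_le_pi y⟩
  have hmoment : ∀ p : Polynomial ℝ, ∫ y in (-1 : ℝ)..1, h (arccos y) * p.eval y = 0 := by
    intro p
    have hsubst := intervalIntegral.integral_comp_mul_deriv'' (a := π) (b := 0) (f := cos)
      (f' := fun x => -sin x) (g := fun y => h (arccos y) * p.eval y) (by fun_prop)
      (fun x _ => (hasDerivAt_cos x).hasDerivWithinAt) (by fun_prop)
      ((harccos.mul p.continuous.continuousOn).mono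
        (image_subset_iff.2 fun x _ => ⟨neg_one_le_cos x, cos_le_one x⟩))
    have hcongr : ∫ x in π..0, ((fun y => h (arccos y) * p.eval y) ∘ cos) x * -sin x =
        ∫ x in π..0, -(h x * sin ((1 : ℕ) * x) * p.eval (cos x)) := by
      refine intervalIntegral.integral_congr fun x hx => ?_
      rw [uIcc_of_ge pi_pos.le] at hx
      simp only [Function.comp_apply, arccos_cos hx.1 hx.2, Nat.cast_one, one_mul]
      ring
    rw [cos_pi, cos_zero, hcongr, intervalIntegral.integral_neg, intervalIntegral.integral_symm,
      integral_mul_sin_mul_polynomial_cos_eq_zero hh hcoeff, neg_zero, neg_zero] at hsubst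
    exact hsubst.symm
  intro x hx
  have hzero : h (arccos (cos x)) = 0 :=
    eqOn_zero_of_forall_integral_mul_polynomial_eq_zero (by norm_num) harccos hmoment
      ⟨neg_one_le_cos x, cos_le_one x⟩
  rwa [arccos_cos hx.1 hx.2] at hzero

lemma eqOn_of_sineCoeff_eq {f g : ℝ → ℝ} (hf : ContinuousOn f (Icc 0 π))
    (hg : ContinuousOn g (Icc 0 π)) (hfg : ∀ n, sineCoeff f n = sineCoeff g n) :
    EqOn f g (Icc 0 π) := fun x hx => sub_eq_zero.1 <|
  eqOn_zero_of_sineCoeff_eq_zero (hf.sub hg)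
    (fun n => by rw [sineCoeff_sub hf hg, hfg, sub_self]) hx

/-! ### Sine and cosine series -/

/-- The sine series with coefficients `a`; where it does not converge its value is `0`. -/
def sineSeries (a : ℕ → ℝ) (x : ℝ) : ℝ := ∑' n : ℕ, a n * sin (n * x)

/-- The cosine series with coefficients `a`; where it does not converge its value is `0`. -/
def cosineSeries (a : ℕ → ℝ) (x : ℝ) : ℝ := ∑' n : ℕ, a n * cos (n * x)

@[simp]
lemma sineSeries_apply_zero (a : ℕ → ℝ) : sineSeries a 0 = 0 := by simp [sineSeries]

@[simp]
lemma sineSeries_apply_pi (a : ℕ → ℝ) : sineSeries a π = 0 := by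
  simp [sineSeries, sin_nat_mul_pi]

lemma norm_mul_sin_le (a x : ℝ) : ‖a * sin x‖ ≤ |a| := by
  rw [norm_mul]
  exact mul_le_of_le_one_right (norm_nonneg a) (abs_sin_le_one x)

lemma norm_mul_cos_le (a x : ℝ) : ‖a * cos x‖ ≤ |a| := by
  rw [norm_mul]
  exact mul_le_of_le_one_right (norm_nonneg a) (abs_cos_le_one x)

lemma summable_mul_sin {a : ℕ → ℝ} (ha : Summable fun n => |a n|) (x : ℝ) :
    Summable fun n : ℕ => a n * sin (n * x) :=
  ha.of_norm_bounded fun _ => norm_mul_sin_le _ _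

lemma continuousOn_sineSeries_prod {X : Type*} [TopologicalSpace X] {s : Set X}
    {a : ℕ → X → ℝ} {B : ℕ → ℝ} (hB : Summable B) (ha : ∀ n, ContinuousOn (a n) s)
    (hle : ∀ n, ∀ t ∈ s, |a n t| ≤ B n) :
    ContinuousOn (fun p : ℝ × X => sineSeries (fun n => a n p.2) p.1) (univ ×ˢ s) := by
  refine continuousOn_tsum (fun n => ?_) hB fun n p hp =>
    (norm_mul_sin_le _ _).trans (hle n p.2 hp.2)
  exact ((ha n).comp continuousOn_snd fun p hp => hp.2).mul (by fun_prop)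

lemma continuous_sineSeries {a : ℕ → ℝ} (ha : Summable fun n => |a n|) :
    Continuous (sineSeries a) :=
  continuous_tsum (fun n => by fun_prop) ha fun _ _ => norm_mul_sin_le _ _

lemma continuous_cosineSeries {a : ℕ → ℝ} (ha : Summable fun n => |a n|) :
    Continuous (cosineSeries a) :=
  continuous_tsum (fun n => by fun_prop) ha fun _ _ => norm_mul_cos_le _ _

lemma hasDerivAt_sineSeries {a : ℕ → ℝ} (ha : Summable fun n : ℕ => |n * a n|) (x : ℝ) :
    HasDerivAt (sineSeries a) (cosineSeries (fun n => n * a n) x) x := by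
  refine hasDerivAt_tsum ha (fun n y => ?_) (fun n y => norm_mul_cos_le _ _) (y₀ := 0)
    (by simp [summable_zero]) x
  refine (((hasDerivAt_id y).const_mul (n : ℝ)).sin.const_mul (a n)).congr_deriv ?_
  simp only [id, mul_one]
  ring

lemma hasDerivAt_cosineSeries {a : ℕ → ℝ} (ha : Summable fun n => |a n|)
    (ha' : Summable fun n : ℕ => |n * a n|) (x : ℝ) :
    HasDerivAt (cosineSeries a) (-sineSeries (fun n => n * a n) x) x := by
  rw [sineSeries, ← tsum_neg]
  have hsum : Summable fun n : ℕ => a n * cos (n * x) :=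
    ha.of_norm_bounded fun _ => norm_mul_cos_le _ _
  refine hasDerivAt_tsum (g := fun n y => a n * cos (n * y))
    (g' := fun n y => -(n * a n * sin (n * y))) ha' (fun n y => ?_) (fun n y => ?_) hsum x
  · refine (((hasDerivAt_id y).const_mul (n : ℝ)).cos.const_mul (a n)).congr_deriv ?_
    simp only [id, mul_one]
    ring
  · rw [norm_neg]
    exact norm_mul_sin_le _ _

lemma sineCoeff_sineSeries {a : ℕ → ℝ} (ha : Summable fun n => |a n|) {m : ℕ} (hm : m ≠ 0) :
    sineCoeff (sineSeries a) m = a m := by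
  have hbound : ∀ (n : ℕ) (x : ℝ), ‖a n * sin (n * x) * sin (m * x)‖ ≤ |a n| := fun n x => by
    rw [mul_right_comm]
    exact (norm_mul_sin_le _ _).trans (norm_mul_sin_le _ _)
  have hsum := intervalIntegral.hasSum_integral_of_dominated_convergence (a := 0) (b := π)
    (μ := volume) (F := fun n x => a n * sin (n * x) * sin (m * x))
    (f := fun x => sineSeries a x * sin (m * x)) (fun n _ => |a n|)
    (fun n => (by fun_prop : Continuous _).aestronglyMeasurable)
    (fun n => .of_forall fun x _ => hbound n x) (.of_forall fun _ _ => ha) (by simp)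
    (.of_forall fun x _ => (summable_mul_sin ha x).hasSum.mul_right _)
  simp only [mul_assoc, intervalIntegral.integral_const_mul, integral_sin_mul_sin _ hm] at hsum
  have hvalue : ∫ x in (0 : ℝ)..π, sineSeries a x * sin (m * x) = a m * (π / 2) := by
    rw [← hsum.tsum_eq, tsum_eq_single m fun n hn => by rw [if_neg hn, mul_zero], if_pos rfl]
  rw [sineCoeff, hvalue]
  field_simp

lemma tendstoUniformly_sineSeries {ι : Type*} {l : Filter ι} [l.NeBot] {a : ι → ℕ → ℝ}
    {A B : ℕ → ℝ} (hB : Summable B) (hle : ∀ᶠ i in l, ∀ n, |a i n| ≤ B n)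
    (hlim : ∀ n, Tendsto (a · n) l (𝓝 (A n))) :
    TendstoUniformly (fun i => sineSeries (a i)) (sineSeries A) l := by
  have hA : ∀ n, |A n| ≤ B n := fun n =>
    le_of_tendsto (hlim n).abs (hle.mono fun i hi => hi n)
  have hl1 : Tendsto (fun i => ∑' n, |a i n - A n|) l (𝓝 0) := by
    rw [← tsum_zero]
    refine tendsto_tsum_of_dominated_convergence (hB.add hB) (fun n => ?_) ?_
    · simpa using ((hlim n).sub_const (A n)).abs
    · filter_upwards [hle] with i hi n
      rw [norm_eq_abs, abs_abs]
      exact (abs_sub _ _).trans (add_le_add (hi n) (hA n))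
  have hA_sum : Summable fun n => |A n| := hB.of_nonneg_of_le (fun _ => abs_nonneg _) hA
  rw [Metric.tendstoUniformly_iff]
  intro ε hε
  filter_upwards [hl1.eventually_lt_const hε, hle] with i hi hile x
  have ha_sum : Summable fun n => |a i n| := hB.of_nonneg_of_le (fun _ => abs_nonneg _) hile
  have hsub : Summable fun n => |a i n - A n| :=
    (ha_sum.add hA_sum).of_nonneg_of_le (fun _ => abs_nonneg _) fun n => abs_sub _ _
  rw [dist_comm, dist_eq_norm, sineSeries, sineSeries,
    ← (summable_mul_sin ha_sum x).tsum_sub (summable_mul_sin hA_sum x)]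
  refine (tsum_of_norm_bounded hsub.hasSum fun n => ?_).trans_lt hi
  rw [← sub_mul]
  exact norm_mul_sin_le _ _

lemma IsC1.continuousOn {f : ℝ → ℝ} (hf : IsC1 f) : ContinuousOn f (Icc 0 π) :=
  let ⟨_, _, hf'⟩ := hf
  fun x hx => (hf' x hx).continuousWithinAt

lemma IsC1.eqOn_sineSeries_sineCoeff {f : ℝ → ℝ} (hf : IsC1 f) (h0 : f 0 = 0) (hπ : f π = 0) :
    EqOn f (sineSeries (sineCoeff f)) (Icc 0 π) := by
  have hsum := hf.summable_abs_sineCoeff h0 hπ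
  refine eqOn_of_sineCoeff_eq hf.continuousOn (continuous_sineSeries hsum).continuousOn fun n => ?_
  rcases eq_or_ne n 0 with rfl | hn
  · simp only [sineCoeff_zero]
  · exact (sineCoeff_sineSeries hsum hn).symm

lemma summable_abs_of_summable_abs_nat_mul {a : ℕ → ℝ} (ha : Summable fun n : ℕ => |n * a n|) :
    Summable fun n => |a n| := by
  refine summable_of_isBigO_nat ha (.of_bound 1 ?_)
  filter_upwards [eventually_ge_atTop 1] with n hn
  simp only [norm_eq_abs, abs_abs, one_mul, abs_mul, Nat.abs_cast]
  exact le_mul_of_one_le_left (abs_nonneg _) (by exact_mod_cast hn)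

lemma isC1_sineSeries {a : ℕ → ℝ} (ha : Summable fun n : ℕ => |n * a n|) : IsC1 (sineSeries a) :=
  ⟨_, (continuous_cosineSeries ha).continuousOn,
    fun x _ => (hasDerivAt_sineSeries ha x).hasDerivWithinAt⟩

/-! ### Duhamel integrals -/

/-- The solution `∫₀ᵗ e^{-κ(t-s)} ρ(s) ds` of `dy/dt = -κ y + ρ`, `y(0) = 0`. With `κ = n²` it is
the `n`-th Fourier mode of the heat flow forced by `ρ`; in particular `Λ_n = duhamel (n²) r₀ t₀`. -/
def duhamel (κ : ℝ) (ρ : ℝ → ℝ) (t : ℝ) : ℝ := ∫ s in (0 : ℝ)..t, exp (-κ * (t - s)) * ρ s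

@[simp]
lemma duhamel_zero_right (κ : ℝ) (ρ : ℝ → ℝ) : duhamel κ ρ 0 = 0 :=
  intervalIntegral.integral_same

lemma duhamel_eq_exp_mul_integral (κ : ℝ) (ρ : ℝ → ℝ) (t : ℝ) :
    duhamel κ ρ t = exp (-κ * t) * ∫ s in (0 : ℝ)..t, exp (κ * s) * ρ s := by
  rw [duhamel, ← intervalIntegral.integral_const_mul]
  refine intervalIntegral.integral_congr fun s _ => ?_
  simp only [← mul_assoc, ← exp_add]
  ring_nf

lemma intervalIntegrable_exp_mul {ρ : ℝ → ℝ} {t : ℝ} (ht : 0 ≤ t)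
    (hρ : ContinuousOn ρ (Icc 0 t)) {w : ℝ → ℝ} (hw : Continuous w) :
    IntervalIntegrable (fun s => exp (w s) * ρ s) volume 0 t :=
  (hw.rexp.continuousOn.mul hρ).intervalIntegrable_of_Icc ht

lemma duhamel_add {κ t : ℝ} {ρ σ : ℝ → ℝ} (ht : 0 ≤ t) (hρ : ContinuousOn ρ (Icc 0 t))
    (hσ : ContinuousOn σ (Icc 0 t)) :
    duhamel κ (ρ + σ) t = duhamel κ ρ t + duhamel κ σ t := by
  simp only [duhamel, Pi.add_apply, mul_add]
  exact intervalIntegral.integral_add (intervalIntegrable_exp_mul ht hρ (by fun_prop))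
    (intervalIntegrable_exp_mul ht hσ (by fun_prop))

lemma continuousOn_duhamel {κ T : ℝ} {ρ : ℝ → ℝ} (hT : 0 ≤ T) (hρ : ContinuousOn ρ (Icc 0 T)) :
    ContinuousOn (duhamel κ ρ) (Icc 0 T) := by
  simp only [funext (duhamel_eq_exp_mul_integral κ ρ)]
  refine ContinuousOn.mul (by fun_prop) ?_
  rw [← uIcc_of_le hT] at hρ ⊢
  refine intervalIntegral.continuousOn_primitive_interval ?_
  exact ContinuousOn.integrableOn_compact isCompact_uIcc (by fun_prop)

lemma hasDerivAt_duhamel {κ T t : ℝ} {ρ : ℝ → ℝ} (hρ : ContinuousOn ρ (Icc 0 T))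
    (ht : t ∈ Ioo 0 T) : HasDerivAt (duhamel κ ρ) (ρ t - κ * duhamel κ ρ t) t := by
  rw [funext (duhamel_eq_exp_mul_integral κ ρ)]
  have hcont : ContinuousOn (fun s => exp (κ * s) * ρ s) (Icc 0 T) := by fun_prop
  have hprim : HasDerivAt (fun t => ∫ s in (0 : ℝ)..t, exp (κ * s) * ρ s) (exp (κ * t) * ρ t) t :=
    intervalIntegral.integral_hasDerivAt_right
      ((hcont.mono (Icc_subset_Icc_right ht.2.le)).intervalIntegrable_of_Icc ht.1.le)
      ((hcont.mono Ioo_subset_Icc_self).stronglyMeasurableAtFilter isOpen_Ioo t ht)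
      (hcont.continuousAt (Icc_mem_nhds ht.1 ht.2))
  have hexp : HasDerivAt (fun t => exp (-κ * t)) (exp (-κ * t) * (-κ)) t := by
    simpa using ((hasDerivAt_id t).const_mul (-κ)).exp
  have hcancel : exp (-κ * t) * exp (κ * t) = 1 := by rw [← exp_add]; simp
  refine (hexp.mul hprim).congr_deriv ?_
  linear_combination ρ t * hcancel

lemma mul_integral_exp (κ t : ℝ) :
    κ * ∫ s in (0 : ℝ)..t, exp (-κ * (t - s)) = 1 - exp (-κ * t) := by
  have hderiv : ∀ s ∈ uIcc 0 t,
      HasDerivAt (fun s => exp (-κ * (t - s))) (κ * exp (-κ * (t - s))) s := fun s _ =>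
    (((hasDerivAt_id s).const_sub t).const_mul (-κ)).exp.congr_deriv (by simp only [id]; ring)
  rw [← intervalIntegral.integral_const_mul, intervalIntegral.integral_eq_sub_of_hasDerivAt hderiv
    (Continuous.intervalIntegrable (by fun_prop) _ _)]
  simp

lemma abs_duhamel_le_mul {κ t M : ℝ} {ρ : ℝ → ℝ} (hκ : 0 ≤ κ) (ht : 0 ≤ t)
    (hM : ∀ s ∈ Icc 0 t, |ρ s| ≤ M) : |duhamel κ ρ t| ≤ M * t := by
  have hle : ∀ s ∈ uIoc 0 t, ‖exp (-κ * (t - s)) * ρ s‖ ≤ M := fun s hs => by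
    rw [uIoc_of_le ht] at hs
    rw [norm_mul, norm_eq_abs, abs_exp]
    refine (mul_le_of_le_one_left (norm_nonneg _) (exp_le_one_iff.2 ?_)).trans
      (hM s (Ioc_subset_Icc_self hs))
    exact mul_nonpos_of_nonpos_of_nonneg (neg_nonpos.2 hκ) (sub_nonneg.2 hs.2)
  simpa [duhamel, abs_of_nonneg ht] using intervalIntegral.norm_integral_le_of_norm_le_const hle

lemma mul_abs_duhamel_le {κ t M : ℝ} {ρ : ℝ → ℝ} (hκ : 0 ≤ κ) (ht : 0 ≤ t)
    (hM : ∀ s ∈ Icc 0 t, |ρ s| ≤ M) : κ * |duhamel κ ρ t| ≤ M := by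
  have hbound : ∀ s ∈ Ioc 0 t, ‖exp (-κ * (t - s)) * ρ s‖ ≤ exp (-κ * (t - s)) * M :=
    fun s hs => by
      rw [norm_mul, norm_eq_abs, abs_exp]
      exact mul_le_mul_of_nonneg_left (hM s (Ioc_subset_Icc_self hs)) (exp_pos _).le
  have hle : |duhamel κ ρ t| ≤ ∫ s in (0 : ℝ)..t, exp (-κ * (t - s)) * M :=
    intervalIntegral.norm_integral_le_of_norm_le ht (.of_forall hbound)
      (Continuous.intervalIntegrable (by fun_prop) _ _)
  have hM0 : 0 ≤ M := (abs_nonneg _).trans (hM 0 (left_mem_Icc.2 ht))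
  calc κ * |duhamel κ ρ t| ≤ κ * ∫ s in (0 : ℝ)..t, exp (-κ * (t - s)) * M := by gcongr
    _ = (1 - exp (-κ * t)) * M := by
      rw [intervalIntegral.integral_mul_const, ← mul_assoc, mul_integral_exp]
    _ ≤ M := mul_le_of_le_one_left hM0 (sub_le_self _ (exp_pos _).le)

lemma tendsto_mul_exp_neg_mul_atTop {δ : ℝ} (hδ : 0 < δ) :
    Tendsto (fun κ => κ * exp (-κ * δ)) atTop (𝓝 0) := by
  have h := (tendsto_pow_mul_exp_neg_atTop_nhds_zero 1).comp (tendsto_id.atTop_mul_const hδ)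
  refine (h.div_const δ).congr' ?_ |>.trans (by simp)
  exact .of_forall fun κ => by simp; field_simp

lemma tendstoUniformlyOn_mul_exp_neg_mul {t : ℝ} {u : Set ℝ} (hu : u ∈ 𝓝 t) :
    TendstoUniformlyOn (fun κ s => κ * exp (-κ * (t - s))) 0 atTop (Iic t \ u) := by
  obtain ⟨δ, hδ, hball⟩ := Metric.mem_nhds_iff.1 hu
  rw [Metric.tendstoUniformlyOn_iff]
  intro ε hε
  filter_upwards [(tendsto_mul_exp_neg_mul_atTop hδ).eventually_lt_const hε,
    eventually_ge_atTop 0] with κ hκε hκ s hs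
  have hfar : δ ≤ t - s := by
    by_contra! h
    exact hs.2 (hball (by rwa [Metric.mem_ball', Real.dist_eq, abs_of_nonneg (sub_nonneg.2 hs.1)]))
  rw [Pi.zero_apply, dist_zero_left, norm_eq_abs, abs_of_nonneg (by positivity)]
  refine (mul_le_mul_of_nonneg_left (exp_le_exp.2 ?_) hκ).trans_lt hκε
  exact mul_le_mul_of_nonpos_left hfar (neg_nonpos.2 hκ)

-- As `κ → ∞` the kernel `κ e^{-κ(t-s)}` on `(0, t]` is an approximate identity at the endpoint `t`.
lemma tendsto_mul_duhamel_atTop {t : ℝ} {ρ : ℝ → ℝ} (ht : 0 < t)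
    (hρ : ContinuousOn ρ (Icc 0 t)) :
    Tendsto (fun κ => κ * duhamel κ ρ t) atTop (𝓝 (ρ t)) := by
  have hpeak := tendsto_setIntegral_peak_smul_of_integrableOn_of_tendsto
    (μ := volume) (s := Ioc 0 t) (t := Ioc 0 t) (x₀ := t) (g := ρ) (l := atTop)
    (φ := fun κ s => κ * exp (-κ * (t - s))) measurableSet_Ioc measurableSet_Ioc Subset.rfl
    self_mem_nhdsWithin measure_Ioc_lt_top.ne ?nonneg ?unif ?mass
    (.of_forall fun κ => (by fun_prop : Continuous _).aestronglyMeasurable)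
    (hρ.integrableOn_Icc.mono_set Ioc_subset_Icc_self)
    ((hρ t (right_mem_Icc.2 ht.le)).mono Ioc_subset_Icc_self)
  case nonneg =>
    filter_upwards [eventually_ge_atTop 0] with κ hκ s _
    positivity
  case unif =>
    exact fun u hu htu => (tendstoUniformlyOn_mul_exp_neg_mul (hu.mem_nhds htu)).mono
      (sdiff_subset_sdiff_left fun s hs => hs.2)
  case mass =>
    have hexp : Tendsto (fun κ => 1 - exp (-κ * t)) atTop (𝓝 (1 - 0)) :=
      (tendsto_exp_atBot.comp
        (tendsto_neg_atTop_atBot.atBot_mul_const ht)).const_sub 1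
    rw [sub_zero] at hexp
    refine hexp.congr fun κ => ?_
    rw [← mul_integral_exp, ← intervalIntegral.integral_const_mul,
      intervalIntegral.integral_of_le ht.le]
  refine hpeak.congr fun κ => ?_
  rw [duhamel, ← intervalIntegral.integral_const_mul, intervalIntegral.integral_of_le ht.le]
  simp only [smul_eq_mul, mul_assoc]

/-! ### Averaging of rapidly oscillating integrands -/

section Averaging

variable {c : ℝ}

lemma exists_mem_Icc_eq_add_nat_mul (hc : 0 < c) {τ : ℝ} (hτ : 0 ≤ τ) :
    ∃ τ' ∈ Icc 0 c, ∃ k : ℕ, τ = τ' + k * c := by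
  have hfloor : ⌊τ / c⌋₊ * c ≤ τ := (le_div_iff₀ hc).1 (Nat.floor_le (by positivity))
  have hlt : τ < (⌊τ / c⌋₊ + 1) * c := (div_lt_iff₀ hc).1 (Nat.lt_floor_add_one _)
  exact ⟨τ - ⌊τ / c⌋₊ * c, ⟨by linarith, by linarith⟩, ⌊τ / c⌋₊, by ring⟩

lemma apply_add_nat_mul_period {p : ℝ → ℝ} (hc : 0 ≤ c) (hp : ∀ τ ∈ Ici (0 : ℝ), p (τ + c) = p τ)
    {τ : ℝ} (hτ : 0 ≤ τ) (k : ℕ) : p (τ + k * c) = p τ := by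
  induction k with
  | zero => simp
  | succ k ih =>
    rw [← ih, ← hp (τ + k * c) (mem_Ici.2 (by positivity))]
    push_cast
    ring_nf

lemma integral_period_block_eq {p : ℝ → ℝ} (hc : 0 ≤ c)
    (hp : ∀ τ ∈ Ici (0 : ℝ), p (τ + c) = p τ) (k : ℕ) :
    ∫ τ in (k * c)..((k + 1) * c), p τ = ∫ τ in (0 : ℝ)..c, p τ := by
  have hshift := intervalIntegral.integral_comp_add_right (a := 0) (b := c) p (k * c)
  rw [zero_add, show c + k * c = (k + 1) * c by ring] at hshift
  rw [← hshift]
  refine intervalIntegral.integral_congr fun τ hτ => ?_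
  rw [uIcc_of_le hc] at hτ
  exact apply_add_nat_mul_period hc hp hτ.1 k

lemma exists_bound_of_periodic {X : Type*} [TopologicalSpace X] {K : Set X} {g : X → ℝ → ℝ}
    (hK : IsCompact K) (hc : 0 < c)
    (hg : ContinuousOn (fun p : X × ℝ => g p.1 p.2) (K ×ˢ Ici 0))
    (hper : ∀ t ∈ K, ∀ τ ∈ Ici (0 : ℝ), g t (τ + c) = g t τ) :
    ∃ M, ∀ t ∈ K, ∀ τ ∈ Ici (0 : ℝ), |g t τ| ≤ M := by
  obtain ⟨M, hM⟩ := (hK.prod (isCompact_Icc (a := 0) (b := c))).exists_bound_of_continuousOn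
    (hg.mono (prod_mono_right Icc_subset_Ici_self))
  refine ⟨M, fun t ht τ hτ => ?_⟩
  obtain ⟨τ', hτ', k, rfl⟩ := exists_mem_Icc_eq_add_nat_mul hc hτ
  rw [apply_add_nat_mul_period hc.le (hper t ht) hτ'.1]
  exact hM (t, τ') ⟨ht, hτ'⟩

lemma exists_uniform_modulus_of_periodic {X : Type*} [PseudoMetricSpace X] {K : Set X}
    {g : X → ℝ → ℝ} (hK : IsCompact K) (hc : 0 < c)
    (hg : ContinuousOn (fun p : X × ℝ => g p.1 p.2) (K ×ˢ Ici 0))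
    (hper : ∀ t ∈ K, ∀ τ ∈ Ici (0 : ℝ), g t (τ + c) = g t τ) {η : ℝ} (hη : 0 < η) :
    ∃ δ > 0, ∀ s ∈ K, ∀ t ∈ K, dist s t < δ → ∀ τ ∈ Ici (0 : ℝ), |g s τ - g t τ| ≤ η := by
  have hunif := (hK.prod (isCompact_Icc (a := 0) (b := c))).uniformContinuousOn_of_continuous
    (hg.mono (prod_mono_right Icc_subset_Ici_self))
  obtain ⟨δ, hδ, hδη⟩ := Metric.uniformContinuousOn_iff.1 hunif η hη
  refine ⟨δ, hδ, fun s hs t ht hst τ hτ => ?_⟩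
  obtain ⟨τ', hτ', k, rfl⟩ := exists_mem_Icc_eq_add_nat_mul hc hτ
  rw [apply_add_nat_mul_period hc.le (hper s hs) hτ'.1,
    apply_add_nat_mul_period hc.le (hper t ht) hτ'.1]
  exact (hδη (s, τ') ⟨hs, hτ'⟩ (t, τ') ⟨ht, hτ'⟩ (by simpa [Prod.dist_eq, hδ] using hst)).le

lemma abs_integral_le_of_blocks {f : ℝ → ℝ} {b η L M : ℝ} (hb : 0 ≤ b) (hL : 0 < L)
    (hη : 0 ≤ η) (hf : IntervalIntegrable f volume 0 b) (hM : ∀ s ∈ Icc 0 b, |f s| ≤ M)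
    (hblock : ∀ k : ℕ, (k + 1) * L ≤ b → |∫ s in (k * L)..((k + 1) * L), f s| ≤ η * L) :
    |∫ s in (0 : ℝ)..b, f s| ≤ η * b + M * L := by
  have hint : ∀ s ∈ Icc 0 b, IntervalIntegrable f volume 0 s := fun s hs =>
    hf.mono_set (by rw [uIcc_of_le hs.1, uIcc_of_le hb]; exact Icc_subset_Icc_right hs.2)
  have hblocks : ∀ k : ℕ, k * L ≤ b → |∫ s in (0 : ℝ)..(k * L), f s| ≤ η * (k * L) := by
    intro k
    induction k with
    | zero => simp
    | succ k ih =>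
      intro hk
      push_cast at hk ⊢
      have hkb : k * L ≤ b := by linarith
      have hk_int := hint (k * L) ⟨by positivity, hkb⟩
      rw [← intervalIntegral.integral_add_adjacent_intervals hk_int
        (hk_int.symm.trans (hint _ ⟨by positivity, hk⟩))]
      linarith [abs_add_le (∫ s in (0 : ℝ)..(k * L), f s) (∫ s in (k * L)..((k + 1) * L), f s),
        ih hkb, hblock k hk]
  obtain ⟨r, hr, N, hbN⟩ := exists_mem_Icc_eq_add_nat_mul hL hb
  have hNb : N * L ≤ b := by linarith [hr.1]
  have hN0 : 0 ≤ N * L := by positivity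
  have hMN : ∀ s ∈ uIoc (N * L) b, ‖f s‖ ≤ M := fun s hs => by
    rw [uIoc_of_le hNb] at hs
    exact hM s ⟨hN0.trans hs.1.le, hs.2⟩
  have hremainder : |∫ s in (N * L)..b, f s| ≤ M * |b - N * L| :=
    intervalIntegral.norm_integral_le_of_norm_le_const hMN
  have hM0 : 0 ≤ M := (abs_nonneg _).trans (hM 0 (left_mem_Icc.2 hb))
  have hN_int := hint (N * L) ⟨hN0, hNb⟩
  calc |∫ s in (0 : ℝ)..b, f s|
      = |(∫ s in (0 : ℝ)..(N * L), f s) + ∫ s in (N * L)..b, f s| := by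
        rw [intervalIntegral.integral_add_adjacent_intervals hN_int (hN_int.symm.trans hf)]
    _ ≤ η * (N * L) + M * |b - N * L| :=
        (abs_add_le _ _).trans (add_le_add (hblocks N hNb) hremainder)
    _ ≤ η * b + M * L := by
      rw [abs_of_nonneg (sub_nonneg.2 hNb)]
      gcongr
      linarith [hr.2]

lemma continuousOn_diag_mul {g : ℝ → ℝ → ℝ} {b ω : ℝ}
    (hg : ContinuousOn (fun p : ℝ × ℝ => g p.1 p.2) (Icc 0 b ×ˢ Ici 0)) (hω : 0 ≤ ω) :
    ContinuousOn (fun s => g s (ω * s)) (Icc 0 b) :=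
  hg.comp (f := fun s => (s, ω * s)) (by fun_prop) fun _ hs => ⟨hs, mul_nonneg hω hs.1⟩

-- Freezing the slow variable at the left end of a period makes the fast integral vanish.
lemma abs_integral_period_block_le {g : ℝ → ℝ → ℝ} {b η δ ω : ℝ} (hc : 0 < c) (hω : 0 < ω)
    (hg : ContinuousOn (fun p : ℝ × ℝ => g p.1 p.2) (Icc 0 b ×ˢ Ici 0))
    (hper : ∀ t ∈ Icc 0 b, ∀ τ ∈ Ici (0 : ℝ), g t (τ + c) = g t τ)
    (hmean : ∀ t ∈ Icc 0 b, ∫ τ in (0 : ℝ)..c, g t τ = 0)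
    (hδ : ∀ s ∈ Icc 0 b, ∀ t ∈ Icc 0 b, dist s t < δ → ∀ τ ∈ Ici (0 : ℝ), |g s τ - g t τ| ≤ η)
    (hcδ : c / ω < δ) {k : ℕ} (hk : (k + 1) * (c / ω) ≤ b) :
    |∫ s in (k * (c / ω))..((k + 1) * (c / ω)), g s (ω * s)| ≤ η * (c / ω) := by
  set L := c / ω with hL
  have hLpos : 0 < L := by positivity
  have hωL : ω * L = c := by rw [hL]; field_simp
  have ha0 : 0 ≤ k * L := by positivity
  have hle : k * L ≤ (k + 1) * L := by linarith
  have ha : k * L ∈ Icc 0 b := ⟨ha0, hle.trans hk⟩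
  have hsub : Icc (k * L) ((k + 1) * L) ⊆ Icc 0 b := Icc_subset_Icc ha0 hk
  have hfast : ∀ s ∈ Icc (k * L) ((k + 1) * L), ω * s ∈ Ici 0 := fun s hs =>
    mul_nonneg hω.le (ha0.trans hs.1)
  have hfrozen : ∫ s in (k * L)..((k + 1) * L), g (k * L) (ω * s) = 0 := by
    rw [intervalIntegral.integral_comp_mul_left _ hω.ne', mul_left_comm, mul_left_comm ω, hωL,
      integral_period_block_eq hc.le (hper _ ha), hmean _ ha, smul_zero]
  have hint : IntervalIntegrable (fun s => g s (ω * s)) volume (k * L) ((k + 1) * L) :=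
    ((continuousOn_diag_mul hg hω.le).mono hsub).intervalIntegrable_of_Icc hle
  have hint_frozen :
      IntervalIntegrable (fun s => g (k * L) (ω * s)) volume (k * L) ((k + 1) * L) :=
    (hg.comp (f := fun s => (k * L, ω * s)) (by fun_prop) fun s hs =>
      ⟨ha, hfast s hs⟩).intervalIntegrable_of_Icc hle
  have hdiff : ∀ s ∈ uIoc (k * L) ((k + 1) * L), ‖g s (ω * s) - g (k * L) (ω * s)‖ ≤ η := by
    intro s hs
    rw [uIoc_of_le hle] at hs
    have hs' := Ioc_subset_Icc_self hs
    refine hδ s (hsub hs') _ ha ?_ _ (hfast s hs')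
    rw [Real.dist_eq, abs_of_pos (sub_pos.2 hs.1)]
    linarith [hs.2]
  have hbound := intervalIntegral.norm_integral_le_of_norm_le_const hdiff
  rwa [intervalIntegral.integral_sub hint hint_frozen, hfrozen, sub_zero, norm_eq_abs,
    show (k + 1) * L - k * L = L by ring, abs_of_pos hLpos] at hbound

lemma tendsto_integral_comp_mul_atTop {g : ℝ → ℝ → ℝ} {b : ℝ} (hc : 0 < c) (hb : 0 ≤ b)
    (hg : ContinuousOn (fun p : ℝ × ℝ => g p.1 p.2) (Icc 0 b ×ˢ Ici 0))
    (hper : ∀ t ∈ Icc 0 b, ∀ τ ∈ Ici (0 : ℝ), g t (τ + c) = g t τ)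
    (hmean : ∀ t ∈ Icc 0 b, ∫ τ in (0 : ℝ)..c, g t τ = 0) :
    Tendsto (fun ω => ∫ s in (0 : ℝ)..b, g s (ω * s)) atTop (𝓝 0) := by
  obtain ⟨M, hM⟩ := exists_bound_of_periodic isCompact_Icc hc hg hper
  rw [Metric.tendsto_nhds]
  intro ε hε
  have hη : 0 < ε / (2 * (b + 1)) := by positivity
  obtain ⟨δ, hδ, hδη⟩ := exists_uniform_modulus_of_periodic isCompact_Icc hc hg hper hη
  have hperiod : Tendsto (fun ω => c / ω) atTop (𝓝 0) := tendsto_const_nhds.div_atTop tendsto_id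
  have hremainder : Tendsto (fun ω => M * (c / ω)) atTop (𝓝 0) := by
    simpa using hperiod.const_mul M
  filter_upwards [eventually_gt_atTop 0, hperiod.eventually_lt_const hδ,
    hremainder.eventually_lt_const (half_pos hε)] with ω hω hωδ hωM
  have hint : IntervalIntegrable (fun s => g s (ω * s)) volume 0 b :=
    (continuousOn_diag_mul hg hω.le).intervalIntegrable_of_Icc hb
  rw [dist_zero_right, norm_eq_abs]
  calc |∫ s in (0 : ℝ)..b, g s (ω * s)| ≤ ε / (2 * (b + 1)) * b + M * (c / ω) :=
        abs_integral_le_of_blocks hb (by positivity) hη.le hint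
          (fun s hs => hM s hs _ (mul_nonneg hω.le hs.1))
          fun _ hk => abs_integral_period_block_le hc hω hg hper hmean hδη hωδ hk
    _ < ε / 2 + ε / 2 := by
      refine add_lt_add_of_le_of_lt ?_ hωM
      rw [div_mul_eq_mul_div, div_le_div_iff₀ (by positivity) two_pos]
      nlinarith
    _ = ε := add_halves ε

end Averaging

/-! ### The heat equation with a separated source -/

lemma hasDerivAt_sineSeries_of_coeff {s : Set ℝ} {a a' : ℕ → ℝ → ℝ} {B : ℕ → ℝ}
    (hB : Summable B) (hs : IsOpen s) (hs' : IsPreconnected s)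
    (ha : ∀ n, ∀ t ∈ s, HasDerivAt (a n) (a' n t) t) (hle : ∀ n, ∀ t ∈ s, |a' n t| ≤ B n)
    {t : ℝ} (ht : t ∈ s) (hsum : Summable fun n => |a n t|) (x : ℝ) :
    HasDerivAt (fun t => sineSeries (fun n => a n t) x) (sineSeries (fun n => a' n t) x) t :=
  hasDerivAt_tsum_of_isPreconnected (g := fun n t => a n t * sin (n * x))
    (g' := fun n t => a' n t * sin (n * x)) hB hs hs'
    (fun n t ht => (ha n t ht).mul_const _)
    (fun n t ht => (norm_mul_sin_le _ _).trans (hle n t ht)) ht (summable_mul_sin hsum x) ht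

/-- The solution at time `t` of `∂u/∂t = ∂²u/∂x² + f(x) ρ(t)` with zero initial and boundary
values, expressed through the sine coefficients `b` of `f`. -/
def heatResponse (b : ℕ → ℝ) (ρ : ℝ → ℝ) (t : ℝ) : ℝ → ℝ :=
  sineSeries fun n => b n * duhamel ((n : ℝ) ^ 2) ρ t

section HeatResponse

variable {b : ℕ → ℝ} {ρ : ℝ → ℝ} {T M t : ℝ}

lemma abs_mul_duhamel_le (ht : t ∈ Icc 0 T) (hM : ∀ s ∈ Icc 0 T, |ρ s| ≤ M) (n : ℕ) :
    |b n * duhamel ((n : ℝ) ^ 2) ρ t| ≤ |b n| * (M * T) := by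
  have hM0 : 0 ≤ M := (abs_nonneg _).trans (hM t ht)
  rw [abs_mul]
  gcongr
  calc |duhamel ((n : ℝ) ^ 2) ρ t| ≤ M * t :=
        abs_duhamel_le_mul (sq_nonneg _) ht.1 fun s hs => hM s ⟨hs.1, hs.2.trans ht.2⟩
    _ ≤ M * T := by gcongr; exact ht.2

lemma abs_sq_mul_duhamel_le (ht : t ∈ Icc 0 T) (hM : ∀ s ∈ Icc 0 T, |ρ s| ≤ M) (n : ℕ) :
    |(n : ℝ) ^ 2 * duhamel ((n : ℝ) ^ 2) ρ t| ≤ M := by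
  rw [abs_mul, abs_of_nonneg (sq_nonneg _)]
  exact mul_abs_duhamel_le (sq_nonneg _) ht.1 fun s hs => hM s ⟨hs.1, hs.2.trans ht.2⟩

lemma abs_mul_deriv_duhamel_le (ht : t ∈ Icc 0 T) (hM : ∀ s ∈ Icc 0 T, |ρ s| ≤ M) (n : ℕ) :
    |b n * (ρ t - (n : ℝ) ^ 2 * duhamel ((n : ℝ) ^ 2) ρ t)| ≤ |b n| * (M + M) := by
  rw [abs_mul]
  gcongr
  exact (abs_sub _ _).trans (add_le_add (hM t ht) (abs_sq_mul_duhamel_le ht hM n))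

lemma abs_nat_mul_nat_mul_duhamel_le (ht : t ∈ Icc 0 T) (hM : ∀ s ∈ Icc 0 T, |ρ s| ≤ M) (n : ℕ) :
    |n * (n * (b n * duhamel ((n : ℝ) ^ 2) ρ t))| ≤ |b n| * M := by
  rw [show (n : ℝ) * (n * (b n * duhamel ((n : ℝ) ^ 2) ρ t))
    = b n * ((n : ℝ) ^ 2 * duhamel ((n : ℝ) ^ 2) ρ t) by ring, abs_mul]
  gcongr
  exact abs_sq_mul_duhamel_le ht hM n

lemma hasDerivAt_heatResponse_time (hb : Summable fun n => |b n|) (hρ : ContinuousOn ρ (Icc 0 T))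
    (ht : t ∈ Ioo 0 T) (x : ℝ) :
    HasDerivAt (fun t => heatResponse b ρ t x)
      (sineSeries (fun n => b n * (ρ t - (n : ℝ) ^ 2 * duhamel ((n : ℝ) ^ 2) ρ t)) x) t := by
  obtain ⟨M, hM⟩ := isCompact_Icc.exists_bound_of_continuousOn hρ
  exact hasDerivAt_sineSeries_of_coeff
    (a' := fun n t => b n * (ρ t - (n : ℝ) ^ 2 * duhamel ((n : ℝ) ^ 2) ρ t))
    (hb.mul_right (M + M)) isOpen_Ioo isPreconnected_Ioo
    (fun n s hs => (hasDerivAt_duhamel hρ hs).const_mul (b n))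
    (fun n s hs => abs_mul_deriv_duhamel_le (Ioo_subset_Icc_self hs) hM n) ht
    ((hb.mul_right (M * T)).of_nonneg_of_le (fun _ => abs_nonneg _)
      (abs_mul_duhamel_le (Ioo_subset_Icc_self ht) hM)) x

lemma isClassicalSolution_heatResponse {f : ℝ → ℝ} (hT : 0 ≤ T) (hb : Summable fun n => |b n|)
    (hρ : ContinuousOn ρ (Icc 0 T)) (hf : EqOn f (sineSeries b) (Icc 0 π)) :
    IsClassicalSolution T (fun x t => f x * ρ t) fun x t => heatResponse b ρ t x := by
  obtain ⟨M, hM⟩ := isCompact_Icc.exists_bound_of_continuousOn hρ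
  have hcont : ∀ n : ℕ, ContinuousOn (duhamel ((n : ℝ) ^ 2) ρ) (Icc 0 T) := fun n =>
    continuousOn_duhamel hT hρ
  have hsub : Ioo 0 T ⊆ Icc 0 T := Ioo_subset_Icc_self
  refine ⟨?_, fun x _ => by simp [heatResponse, sineSeries], fun t _ => by simp [heatResponse],
    fun x t => sineSeries (fun n => b n * (ρ t - (n : ℝ) ^ 2 * duhamel ((n : ℝ) ^ 2) ρ t)) x,
    fun x t => cosineSeries (fun n => n * (b n * duhamel ((n : ℝ) ^ 2) ρ t)) x,
    fun x t => -sineSeries (fun n => n * (n * (b n * duhamel ((n : ℝ) ^ 2) ρ t))) x,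
    ?_, ?_, fun x hx t ht => ?_⟩
  · exact (continuousOn_sineSeries_prod (hb.mul_right (M * T)) (fun n => (hcont n).const_mul _)
      fun n t ht => abs_mul_duhamel_le ht hM n).mono (prod_mono_left (subset_univ _))
  · exact (continuousOn_sineSeries_prod (hb.mul_right (M + M))
      (fun n => (hρ.sub ((hcont n).const_mul _)).const_mul _)
      fun n t ht => abs_mul_deriv_duhamel_le ht hM n).mono (prod_mono (subset_univ _) hsub)
  · exact ((continuousOn_sineSeries_prod (hb.mul_right M)
      (fun n => (((hcont n).const_mul _).const_mul _).const_mul _)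
      fun n t ht => abs_nat_mul_nat_mul_duhamel_le ht hM n).mono
        (prod_mono (subset_univ _) hsub)).neg
  · have hsum_uxx : Summable fun n : ℕ => |n * (n * (b n * duhamel ((n : ℝ) ^ 2) ρ t))| :=
      (hb.mul_right M).of_nonneg_of_le (fun _ => abs_nonneg _)
        (abs_nat_mul_nat_mul_duhamel_le (hsub ht) hM)
    have hsum_ux := summable_abs_of_summable_abs_nat_mul hsum_uxx
    refine ⟨hasDerivAt_heatResponse_time hb hρ ht x, hasDerivAt_sineSeries hsum_ux x,
      hasDerivAt_cosineSeries hsum_ux hsum_uxx x, ?_⟩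
    simp only [hf (Ioo_subset_Icc_self hx), sineSeries]
    rw [neg_add_eq_sub, ← tsum_mul_right,
      ← ((summable_mul_sin hb x).mul_right _).tsum_sub (summable_mul_sin hsum_uxx x)]
    exact tsum_congr fun n => by ring

end HeatResponse

section FastOscillation

variable {c t₀ : ℝ} {r0 : ℝ → ℝ} {r1 : ℝ → ℝ → ℝ}

lemma tendsto_duhamel_fast (hc : 0 < c) (ht₀ : 0 ≤ t₀) (hr0 : ContinuousOn r0 (Icc 0 t₀))
    (hr1 : ContinuousOn (fun p : ℝ × ℝ => r1 p.1 p.2) (Icc 0 t₀ ×ˢ Ici 0))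
    (hper : ∀ t ∈ Icc 0 t₀, ∀ τ ∈ Ici (0 : ℝ), r1 t (τ + c) = r1 t τ)
    (hmean : ∀ t ∈ Icc 0 t₀, ∫ τ in (0 : ℝ)..c, r1 t τ = 0) (κ : ℝ) :
    Tendsto (fun ω => duhamel κ (fun t => r0 t + r1 t (ω * t)) t₀) atTop
      (𝓝 (duhamel κ r0 t₀)) := by
  have hosc : Tendsto (fun ω => duhamel κ (fun t => r1 t (ω * t)) t₀) atTop (𝓝 0) := by
    refine tendsto_integral_comp_mul_atTop (g := fun t τ => exp (-κ * (t₀ - t)) * r1 t τ) hc ht₀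
      (ContinuousOn.mul (by fun_prop) hr1) (fun t ht τ hτ => ?_) fun t ht => ?_
    · rw [hper t ht τ hτ]
    · rw [intervalIntegral.integral_const_mul, hmean t ht, mul_zero]
  rw [← add_zero (duhamel κ r0 t₀)]
  refine (hosc.const_add _).congr' ?_
  filter_upwards [eventually_ge_atTop 0] with ω hω
  exact (duhamel_add ht₀ hr0 (continuousOn_diag_mul hr1 hω)).symm

lemma tendstoUniformly_heatResponse_fast {b : ℕ → ℝ} (hb : Summable fun n => |b n|) (hc : 0 < c)
    (ht₀ : 0 ≤ t₀) (hr0 : ContinuousOn r0 (Icc 0 t₀))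
    (hr1 : ContinuousOn (fun p : ℝ × ℝ => r1 p.1 p.2) (Icc 0 t₀ ×ˢ Ici 0))
    (hper : ∀ t ∈ Icc 0 t₀, ∀ τ ∈ Ici (0 : ℝ), r1 t (τ + c) = r1 t τ)
    (hmean : ∀ t ∈ Icc 0 t₀, ∫ τ in (0 : ℝ)..c, r1 t τ = 0) :
    TendstoUniformly (fun ω => heatResponse b (fun t => r0 t + r1 t (ω * t)) t₀)
      (heatResponse b r0 t₀) atTop := by
  obtain ⟨M₀, hM₀⟩ := isCompact_Icc.exists_bound_of_continuousOn hr0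
  obtain ⟨M₁, hM₁⟩ := exists_bound_of_periodic isCompact_Icc hc hr1 hper
  refine tendstoUniformly_sineSeries (hb.mul_right ((M₀ + M₁) * t₀)) ?_ fun n =>
    (tendsto_duhamel_fast hc ht₀ hr0 hr1 hper hmean _).const_mul (b n)
  filter_upwards [eventually_ge_atTop 0] with ω hω
  refine abs_mul_duhamel_le (right_mem_Icc.2 ht₀) fun s hs => ?_
  exact (abs_add_le _ _).trans (add_le_add (hM₀ s hs) (hM₁ s hs _ (mul_nonneg hω hs.1)))

end FastOscillation

/-! ### Solutions of Problem 2 -/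

lemma forall_exists_forall_abs_sub_le_iff_tendstoUniformlyOn {X : Type*} {s : Set X}
    {v : ℝ → X → ℝ} {ψ : X → ℝ} :
    (∀ ε > 0, ∃ ω₀ ≥ (1 : ℝ), ∀ ω ≥ ω₀, ∀ x ∈ s, |v ω x - ψ x| ≤ ε) ↔
      TendstoUniformlyOn v ψ atTop s := by
  rw [Metric.tendstoUniformlyOn_iff]
  constructor
  · intro h ε hε
    obtain ⟨ω₀, -, hω₀⟩ := h (ε / 2) (half_pos hε)
    filter_upwards [eventually_ge_atTop ω₀] with ω hω x hx
    rw [dist_comm, Real.dist_eq]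
    exact (hω₀ ω hω x hx).trans_lt (half_lt_self hε)
  · intro h ε hε
    obtain ⟨ω₀, hω₀⟩ := eventually_atTop.1 (h ε hε)
    refine ⟨max 1 ω₀, le_max_left _ _, fun ω hω x hx => ?_⟩
    rw [← Real.dist_eq, dist_comm]
    exact (hω₀ ω ((le_max_right _ _).trans hω) x hx).le

section Problem2

variable {T t₀ c : ℝ} {r0 : ℝ → ℝ} {r1 : ℝ → ℝ → ℝ} {f ψ : ℝ → ℝ}

lemma solvesProblem2_iff_eqOn (hc : 0 < c) (ht₀ : t₀ ∈ Ioc 0 T) (hr0 : ContinuousOn r0 (Icc 0 T))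
    (hr1 : ContinuousOn (fun p : ℝ × ℝ => r1 p.1 p.2) (Icc 0 T ×ˢ Ici 0))
    (hper : ∀ t ∈ Icc 0 T, ∀ τ ∈ Ici (0 : ℝ), r1 t (τ + c) = r1 t τ)
    (hmean : ∀ t ∈ Icc 0 T, ∫ τ in (0 : ℝ)..c, r1 t τ = 0) :
    SolvesProblem2 T t₀ r0 r1 ψ f ↔ IsC1 f ∧ f 0 = 0 ∧ f π = 0 ∧
      EqOn ψ (heatResponse (sineCoeff f) r0 t₀) (Icc 0 π) := by
  refine and_congr_right fun hf => and_congr_right fun h0 => and_congr_right fun hπ => ?_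
  have hT : 0 < T := ht₀.1.trans_le ht₀.2
  have hsub : Icc 0 t₀ ⊆ Icc 0 T := Icc_subset_Icc_right ht₀.2
  have hsum := hf.summable_abs_sineCoeff h0 hπ
  set v : ℝ → ℝ → ℝ → ℝ := fun ω x t =>
    heatResponse (sineCoeff f) (fun t => r0 t + r1 t (ω * t)) t x
  have hv : ∀ ω, 1 ≤ ω → IsClassicalSolution T (fun x t => f x * (r0 t + r1 t (ω * t))) (v ω) :=
    fun ω hω => isClassicalSolution_heatResponse hT.le hsum
      (hr0.add (continuousOn_diag_mul hr1 (zero_le_one.trans hω)))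
      (hf.eqOn_sineSeries_sineCoeff h0 hπ)
  have hlim : TendstoUniformlyOn (fun ω x => v ω x t₀) (heatResponse (sineCoeff f) r0 t₀) atTop
      (Icc 0 π) :=
    (tendstoUniformly_heatResponse_fast hsum hc ht₀.1.le (hr0.mono hsub)
      (hr1.mono (prod_mono_left hsub)) (fun t ht => hper t (hsub ht))
      fun t ht => hmean t (hsub ht)).tendstoUniformlyOn
  constructor
  · intro h x hx
    have hψ := forall_exists_forall_abs_sub_le_iff_tendstoUniformlyOn
      (v := fun ω x => v ω x t₀).1 (h v hv)
    exact tendsto_nhds_unique (hψ.tendsto_at hx) (hlim.tendsto_at hx)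
  · intro h u hu
    refine forall_exists_forall_abs_sub_le_iff_tendstoUniformlyOn (v := fun ω x => u ω x t₀).2 ?_
    refine (hlim.congr_right h.symm).congr ?_
    filter_upwards [eventually_ge_atTop 1] with ω hω x hx
    exact (hv ω hω).unique hT (hu ω hω) x hx t₀ (Ioc_subset_Icc_self ht₀)

lemma solvesProblem2_iff_sineCoeff (hc : 0 < c) (ht₀ : t₀ ∈ Ioc 0 T)
    (hr0 : ContinuousOn r0 (Icc 0 T))
    (hr1 : ContinuousOn (fun p : ℝ × ℝ => r1 p.1 p.2) (Icc 0 T ×ˢ Ici 0))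
    (hper : ∀ t ∈ Icc 0 T, ∀ τ ∈ Ici (0 : ℝ), r1 t (τ + c) = r1 t τ)
    (hmean : ∀ t ∈ Icc 0 T, ∫ τ in (0 : ℝ)..c, r1 t τ = 0) (hψ : ContinuousOn ψ (Icc 0 π)) :
    SolvesProblem2 T t₀ r0 r1 ψ f ↔ IsC1 f ∧ f 0 = 0 ∧ f π = 0 ∧
      ∀ n : ℕ, sineCoeff ψ (n + 1) =
        sineCoeff f (n + 1) * duhamel (((n + 1 : ℕ) : ℝ) ^ 2) r0 t₀ := by
  rw [solvesProblem2_iff_eqOn hc ht₀ hr0 hr1 hper hmean]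
  refine and_congr_right fun hf => and_congr_right fun h0 => and_congr_right fun hπ => ?_
  obtain ⟨M, hM⟩ := isCompact_Icc.exists_bound_of_continuousOn
    (hr0.mono (Icc_subset_Icc_right ht₀.2))
  have hsum : Summable fun n : ℕ => |sineCoeff f n * duhamel ((n : ℝ) ^ 2) r0 t₀| :=
    ((hf.summable_abs_sineCoeff h0 hπ).mul_right (M * t₀)).of_nonneg_of_le
      (fun _ => abs_nonneg _) (abs_mul_duhamel_le (right_mem_Icc.2 ht₀.1.le) hM)
  have hcoeff : ∀ n : ℕ, sineCoeff (heatResponse (sineCoeff f) r0 t₀) (n + 1) =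
      sineCoeff f (n + 1) * duhamel (((n + 1 : ℕ) : ℝ) ^ 2) r0 t₀ := fun n =>
    sineCoeff_sineSeries hsum n.succ_ne_zero
  simp only [← hcoeff]
  refine ⟨fun h n => ?_, fun h => ?_⟩
  · exact sineCoeff_congr h (n + 1)
  · refine eqOn_of_sineCoeff_eq hψ (continuous_sineSeries hsum).continuousOn fun n => ?_
    cases n with
    | zero => simp only [sineCoeff_zero]
    | succ n => exact h n

end Problem2

lemma nat_sq_mul_sineCoeff {g g' g'' : ℝ → ℝ}
    (hg : ∀ x ∈ Icc 0 π, HasDerivWithinAt g (g' x) (Icc 0 π) x)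
    (hg' : ∀ x ∈ Icc 0 π, HasDerivWithinAt g' (g'' x) (Icc 0 π) x)
    (hg'' : ContinuousOn g'' (Icc 0 π)) (h0 : g 0 = 0) (hπ : g π = 0) (n : ℕ) :
    (n : ℝ) ^ 2 * sineCoeff g n = -sineCoeff g'' n := by
  have hcont : ContinuousOn g' (Icc 0 π) := fun x hx => (hg' x hx).continuousWithinAt
  rw [sq, mul_assoc, nat_mul_sineCoeff hg (hcont.intervalIntegrable_of_Icc pi_pos.le) h0 hπ,
    nat_mul_cosineCoeff hg' (hg''.intervalIntegrable_of_Icc pi_pos.le)]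

lemma summable_abs_nat_cube_mul_sineCoeff {ψ ψ1 ψ2 ψ3 ψ4 : ℝ → ℝ}
    (hψ1 : ∀ x ∈ Icc 0 π, HasDerivWithinAt ψ (ψ1 x) (Icc 0 π) x)
    (hψ2 : ∀ x ∈ Icc 0 π, HasDerivWithinAt ψ1 (ψ2 x) (Icc 0 π) x)
    (hψ3 : ∀ x ∈ Icc 0 π, HasDerivWithinAt ψ2 (ψ3 x) (Icc 0 π) x)
    (hψ4 : ∀ x ∈ Icc 0 π, HasDerivWithinAt ψ3 (ψ4 x) (Icc 0 π) x)
    (hψ4c : ContinuousOn ψ4 (Icc 0 π)) (h0 : ψ 0 = 0) (hπ : ψ π = 0) (h0' : ψ2 0 = 0)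
    (hπ' : ψ2 π = 0) : Summable fun n : ℕ => |(n : ℝ) ^ 3 * sineCoeff ψ n| := by
  have hψ2c : ContinuousOn ψ2 (Icc 0 π) := fun x hx => (hψ3 x hx).continuousWithinAt
  have hfour : ∀ n : ℕ, (n : ℝ) ^ 4 * sineCoeff ψ n = sineCoeff ψ4 n := fun n => by
    linear_combination (n : ℝ) ^ 2 * nat_sq_mul_sineCoeff hψ1 hψ2 hψ2c h0 hπ n -
      nat_sq_mul_sineCoeff hψ3 hψ4 hψ4c h0' hπ' n
  refine (summable_abs_div_nat_of_summable_sq (summable_sq_sineCoeff hψ4c)).congr fun n => ?_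
  rcases eq_or_ne n 0 with rfl | hn
  · simp
  · rw [← hfour, abs_mul, abs_mul, abs_pow, abs_pow, Nat.abs_cast]
    field_simp

lemma summable_abs_nat_mul_div_duhamel {a : ℕ → ℝ} {ρ : ℝ → ℝ} {t : ℝ}
    (ha : Summable fun n : ℕ => |(n : ℝ) ^ 3 * a n|) (ht : 0 < t)
    (hρ : ContinuousOn ρ (Icc 0 t)) (hne : ρ t ≠ 0) :
    Summable fun n : ℕ => |n * (a n / duhamel ((n : ℝ) ^ 2) ρ t)| := by
  have hlim : Tendsto (fun n : ℕ => ((n : ℝ) ^ 2 * duhamel ((n : ℝ) ^ 2) ρ t)⁻¹) atTop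
      (𝓝 (ρ t)⁻¹) :=
    ((tendsto_mul_duhamel_atTop ht hρ).comp
      ((tendsto_pow_atTop two_ne_zero).comp tendsto_natCast_atTop_atTop)).inv₀ hne
  have hfactor : ∀ n : ℕ, n * (a n / duhamel ((n : ℝ) ^ 2) ρ t) =
      ((n : ℝ) ^ 2 * duhamel ((n : ℝ) ^ 2) ρ t)⁻¹ * ((n : ℝ) ^ 3 * a n) := fun n => by
    rcases eq_or_ne n 0 with rfl | hn
    · simp
    · field_simp
  refine summable_of_isBigO_nat ha (Asymptotics.IsBigO.abs_abs ?_)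
  simpa only [hfactor, one_mul] using
    (hlim.isBigO_one ℝ).mul (Asymptotics.isBigO_refl (fun n : ℕ => (n : ℝ) ^ 3 * a n) atTop)

lemma eq_mul_iff_ne_zero_imp_eq_div {G₀ : Type*} [GroupWithZero G₀] {a b l : G₀}
    (h : l = 0 → a = 0) : a = b * l ↔ (l ≠ 0 → b = a / l) := by
  rcases eq_or_ne l 0 with rfl | hl
  · simp only [h rfl, mul_zero, ne_eq, not_true_eq_false, false_imp_iff]
  · simp only [eq_div_iff hl, hl, ne_eq, not_false_eq_true, forall_const, eq_comm]

theorem problem2_degenerate_case_general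
    (T : ℝ) (r0 : ℝ → ℝ) (r1 : ℝ → ℝ → ℝ) (c : ℝ) (hc : 0 < c)
    (hr0 : ContinuousOn r0 (Icc 0 T))
    (hper : ∀ t ∈ Icc (0 : ℝ) T, ∀ τ ∈ Ici (0 : ℝ), r1 t (τ + c) = r1 t τ)
    (hzero : ∀ t ∈ Icc (0 : ℝ) T, (∫ τ in (0 : ℝ)..c, r1 t τ) = 0)
    (hr1c : ContinuousOn (fun p : ℝ × ℝ => r1 p.1 p.2) (Icc 0 T ×ˢ Ici 0))
    (t₀ : ℝ) (ht₀ : t₀ ∈ Ioc 0 T) (hr0t₀ : r0 t₀ ≠ 0)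
    (Λ : ℕ → ℝ)
    (hΛ : ∀ n : ℕ, Λ n = ∫ s in (0 : ℝ)..t₀, exp (-(n : ℝ) ^ 2 * (t₀ - s)) * r0 s)
    (ψ ψ1 ψ2 ψ3 ψ4 : ℝ → ℝ)
    (hψ1 : ∀ x ∈ Icc (0 : ℝ) π, HasDerivWithinAt ψ (ψ1 x) (Icc 0 π) x)
    (hψ2 : ∀ x ∈ Icc (0 : ℝ) π, HasDerivWithinAt ψ1 (ψ2 x) (Icc 0 π) x)
    (hψ3 : ∀ x ∈ Icc (0 : ℝ) π, HasDerivWithinAt ψ2 (ψ3 x) (Icc 0 π) x)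
    (hψ4 : ∀ x ∈ Icc (0 : ℝ) π, HasDerivWithinAt ψ3 (ψ4 x) (Icc 0 π) x)
    (hψ4c : ContinuousOn ψ4 (Icc 0 π))
    (hψb : ψ 0 = 0 ∧ ψ π = 0 ∧ ψ2 0 = 0 ∧ ψ2 π = 0)
    (ψc : ℕ → ℝ)
    (hψc : ∀ n : ℕ, ψc n = (2 / π) * ∫ s in (0 : ℝ)..π, ψ s * sin ((n : ℝ) * s)) :
    ((∃ f : ℝ → ℝ, SolvesProblem2 T t₀ r0 r1 ψ f) ↔
      (∀ n : ℕ, Λ (n + 1) = 0 → ψc (n + 1) = 0)) ∧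
    ((∀ n : ℕ, Λ (n + 1) = 0 → ψc (n + 1) = 0) →
      ∀ f : ℝ → ℝ,
        SolvesProblem2 T t₀ r0 r1 ψ f ↔
          (IsC1 f ∧ f 0 = 0 ∧ f π = 0 ∧
            ∀ n : ℕ, Λ (n + 1) ≠ 0 →
              (2 / π) * (∫ s in (0 : ℝ)..π, f s * sin (((n : ℝ) + 1) * s)) =
                ψc (n + 1) / Λ (n + 1))) := by
  replace hΛ : ∀ n : ℕ, Λ n = duhamel ((n : ℝ) ^ 2) r0 t₀ := hΛ
  obtain rfl : ψc = sineCoeff ψ := funext hψc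
  have hψ : ContinuousOn ψ (Icc 0 π) := fun x hx => (hψ1 x hx).continuousWithinAt
  have hsine : ∀ (f : ℝ → ℝ) (n : ℕ),
      (2 / π) * (∫ s in (0 : ℝ)..π, f s * sin (((n : ℝ) + 1) * s)) = sineCoeff f (n + 1) :=
    fun f n => by simp only [sineCoeff, Nat.cast_add_one]
  have hsolves : ∀ f : ℝ → ℝ, SolvesProblem2 T t₀ r0 r1 ψ f ↔ IsC1 f ∧ f 0 = 0 ∧ f π = 0 ∧
      ∀ n : ℕ, sineCoeff ψ (n + 1) = sineCoeff f (n + 1) * Λ (n + 1) := fun f => by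
    simpa only [hΛ] using solvesProblem2_iff_sineCoeff hc ht₀ hr0 hr1c hper hzero hψ
  have hdiv : (∀ n : ℕ, Λ (n + 1) = 0 → sineCoeff ψ (n + 1) = 0) → ∀ (f : ℝ → ℝ) (n : ℕ),
      sineCoeff ψ (n + 1) = sineCoeff f (n + 1) * Λ (n + 1) ↔
        (Λ (n + 1) ≠ 0 → sineCoeff f (n + 1) = sineCoeff ψ (n + 1) / Λ (n + 1)) :=
    fun h f n => eq_mul_iff_ne_zero_imp_eq_div (h n)
  simp only [hsine, hsolves]
  refine ⟨⟨?_, fun h => ?_⟩, fun h f => by simp only [hdiv h]⟩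
  · rintro ⟨f, -, -, -, hf⟩ n hn
    rw [hf n, hn, mul_zero]
  · have hsum : Summable fun n : ℕ => |n * (sineCoeff ψ n / Λ n)| := by
      simpa only [hΛ] using summable_abs_nat_mul_div_duhamel
        (summable_abs_nat_cube_mul_sineCoeff hψ1 hψ2 hψ3 hψ4 hψ4c hψb.1 hψb.2.1 hψb.2.2.1
          hψb.2.2.2) ht₀.1 (hr0.mono (Icc_subset_Icc_right ht₀.2)) hr0t₀
    exact ⟨_, isC1_sineSeries hsum, sineSeries_apply_zero _, sineSeries_apply_pi _, fun n =>
      (hdiv h _ n).2 fun _ =>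
        sineCoeff_sineSeries (summable_abs_of_summable_abs_nat_mul hsum) n.succ_ne_zero⟩

/-- **Theorem 4, part 2.** Suppose `M₀ = {n ≥ 1 : Λ_n = 0} ≠ ∅`. Then Problem 2 is
solvable iff `ψ_n = 0` for every `n ∈ M₀`, and in that case the solutions are exactly
the `C¹` functions vanishing at `0, π` whose sine coefficients equal `ψ_n/Λ_n` for
`n ∉ M₀` (those with `n ∈ M₀` being arbitrary). -/
theorem problem2_degenerate_case
    (T : ℝ) (hT : 0 < T)
    (r0 : ℝ → ℝ) (r1 : ℝ → ℝ → ℝ)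
    (hr0 : ContinuousOn r0 (Icc 0 T))
    (hper : ∀ t ∈ Icc (0:ℝ) T, ∀ τ ∈ Ici (0:ℝ), r1 t (τ + 2 * π) = r1 t τ)
    (hzero : ∀ t ∈ Icc (0:ℝ) T, (∫ τ in (0:ℝ)..(2 * π), r1 t τ) = 0)
    (α : ℝ) (hα : α ∈ Ioo (0:ℝ) 1) (C : ℝ)
    (hr1c : ContinuousOn (fun p : ℝ × ℝ => r1 p.1 p.2) (Icc 0 T ×ˢ Ici 0))
    (hr1hold : ∀ τ ∈ Ici (0:ℝ), ∀ t ∈ Icc (0:ℝ) T, ∀ t' ∈ Icc (0:ℝ) T,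
      |r1 t τ - r1 t' τ| ≤ C * |t - t'| ^ α)
    (t₀ : ℝ) (ht₀ : t₀ ∈ Ioc 0 T) (hr0t₀ : r0 t₀ ≠ 0)
    (Λ : ℕ → ℝ)
    (hΛ : ∀ n : ℕ, Λ n = ∫ s in (0:ℝ)..t₀, exp (-(n:ℝ) ^ 2 * (t₀ - s)) * r0 s)
    (ψ ψ1 ψ2 ψ3 ψ4 : ℝ → ℝ)
    (hψ1 : ∀ x ∈ Icc (0:ℝ) π, HasDerivWithinAt ψ (ψ1 x) (Icc 0 π) x)
    (hψ2 : ∀ x ∈ Icc (0:ℝ) π, HasDerivWithinAt ψ1 (ψ2 x) (Icc 0 π) x)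
    (hψ3 : ∀ x ∈ Icc (0:ℝ) π, HasDerivWithinAt ψ2 (ψ3 x) (Icc 0 π) x)
    (hψ4 : ∀ x ∈ Icc (0:ℝ) π, HasDerivWithinAt ψ3 (ψ4 x) (Icc 0 π) x)
    (hψ4c : ContinuousOn ψ4 (Icc 0 π))
    (hψb : ψ 0 = 0 ∧ ψ π = 0 ∧ ψ2 0 = 0 ∧ ψ2 π = 0 ∧ ψ4 0 = 0 ∧ ψ4 π = 0)
    (ψc : ℕ → ℝ)
    (hψc : ∀ n : ℕ, ψc n = (2 / π) * ∫ s in (0:ℝ)..π, ψ s * sin ((n:ℝ) * s))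
    -- `M₀ ≠ ∅`
    (hM₀ : ∃ n : ℕ, Λ (n + 1) = 0) :
    -- Problem 2 is solvable iff `ψ_n = 0` for all `n ∈ M₀`
    ((∃ f : ℝ → ℝ, SolvesProblem2 T t₀ r0 r1 ψ f) ↔
      (∀ n : ℕ, Λ (n + 1) = 0 → ψc (n + 1) = 0)) ∧
    -- in the solvable case, the solution set is exactly as described
    ((∀ n : ℕ, Λ (n + 1) = 0 → ψc (n + 1) = 0) →
      ∀ f : ℝ → ℝ,
        SolvesProblem2 T t₀ r0 r1 ψ f ↔
          (IsC1 f ∧ f 0 = 0 ∧ f π = 0 ∧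
            ∀ n : ℕ, Λ (n + 1) ≠ 0 →
              (2 / π) * (∫ s in (0:ℝ)..π, f s * sin (((n:ℝ) + 1) * s)) =
                ψc (n + 1) / Λ (n + 1))) :=
  problem2_degenerate_case_general T r0 r1 (2 * π) two_pi_pos hr0 hper hzero hr1c t₀ ht₀ hr0t₀ Λ hΛ
    ψ ψ1 ψ2 ψ3 ψ4 hψ1 hψ2 hψ3 hψ4 hψ4c ⟨hψb.1, hψb.2.1, hψb.2.2.1, hψb.2.2.2.1⟩ ψc hψc
end
end

section
/- For every N ≥ 1 and every choice of pairwise distinct points x₀, x₁, …, x_{N−1} ∈ (0,π), the N×N matrix A with entries A_{j,n} = sin(n x_j), n = 1,…,N, j = 0,…,N−1, is nonsingular (det A ≠ 0). -/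
open Real Set

noncomputable section

/-!
Factoring `sin x_j` out of row `j` leaves entries that are the values at `2 cos x_j` of monic
polynomials of degrees `0, …, N - 1` (the rescaled Chebyshev polynomials of the second kind), so
the remaining determinant is the Vandermonde determinant in the `2 cos x_j`.
-/

section ChebyshevS

open Polynomial Polynomial.Chebyshev

variable {R : Type*} [CommRing R]

theorem degree_chebyshev_S_natCast [Nontrivial R] (n : ℕ) : (S R n).degree = n := by
  induction n using Nat.twoStepInduction with
  | zero => simp
  | one => simp
  | more n ih₀ ih₁ =>
    have degree_X_mul_S : (X * S R (n + 1 : ℕ)).degree = ((n + 2 : ℕ) : WithBot ℕ) := by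
      rw [mul_comm, degree_mul_X, ih₁]
      norm_cast
    have degree_lt : (S R n).degree < (X * S R (n + 1 : ℕ)).degree := by
      rw [degree_X_mul_S, ih₀]
      exact_mod_cast (by lia : n < n + 2)
    push_cast at degree_X_mul_S degree_lt ⊢
    rw [S_add_two, degree_sub_eq_left_of_degree_lt degree_lt, degree_X_mul_S]

theorem monic_chebyshev_S_natCast (n : ℕ) : (S R n).Monic := by
  nontriviality R
  induction n using Nat.twoStepInduction with
  | zero => simp
  | one => simp [monic_X]
  | more n _ ih =>
    have degree_lt : (S R n).degree < (X * S R (n + 1 : ℕ)).degree := by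
      rw [mul_comm, degree_mul_X, degree_chebyshev_S_natCast, degree_chebyshev_S_natCast]
      exact_mod_cast (by lia : n < n + 1 + 1)
    push_cast at ih degree_lt ⊢
    rw [S_add_two]
    exact (monic_X.mul ih).sub_of_left degree_lt

theorem det_eval_chebyshev_S {N : ℕ} (v : Fin N → R) :
    (Matrix.of fun i j : Fin N => (S R (j : ℕ)).eval (v i)).det = (Matrix.vandermonde v).det := by
  nontriviality R
  exact (Matrix.det_eval_matrixOfPolynomials_eq_det_vandermonde v _
    (fun j => natDegree_eq_of_degree_eq_some (degree_chebyshev_S_natCast j))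
    fun j => monic_chebyshev_S_natCast j).symm

theorem det_sin_matrix {N : ℕ} (x : Fin N → ℝ) :
    (Matrix.of fun j n : Fin N => sin ((((n : ℕ) : ℝ) + 1) * x j)).det =
      (∏ j, sin (x j)) * (Matrix.vandermonde fun j => 2 * cos (x j)).det := by
  have sin_eq (j n : Fin N) : sin ((((n : ℕ) : ℝ) + 1) * x j) =
      sin (x j) * (S ℝ (n : ℕ)).eval (2 * cos (x j)) := by
    rw [mul_comm (sin (x j)), S_two_mul_real_cos, Int.cast_natCast]
  simp only [sin_eq]
  rw [← det_eval_chebyshev_S, ← Matrix.det_mul_column]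
  simp only [Matrix.of_apply]

end ChebyshevS

theorem sin_matrix_nonsingular_general {N : ℕ} (x : Fin N → ℝ) :
    (Matrix.of fun j n : Fin N => sin ((((n : ℕ) : ℝ) + 1) * x j)).det ≠ 0 ↔
      (∀ j, sin (x j) ≠ 0) ∧ Function.Injective fun j => cos (x j) := by
  rw [det_sin_matrix, mul_ne_zero_iff, Finset.prod_ne_zero_iff,
    Matrix.det_vandermonde_ne_zero_iff]
  simp only [Finset.mem_univ, true_imp_iff, Function.Injective, mul_right_inj' (two_ne_zero' ℝ)]

/-- The `N×N` matrix `(sin (n x_j))`, `n = 1,…,N`, `j = 0,…,N−1`, built from pairwise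
distinct points `x_j ∈ (0,π)`, is nonsingular. -/
theorem sin_matrix_nonsingular
    (N : ℕ) (hN : 1 ≤ N) (x : Fin N → ℝ)
    (hx : ∀ j, x j ∈ Ioo 0 π) (hinj : Function.Injective x) :
    (Matrix.of fun j n : Fin N => sin ((((n : ℕ) : ℝ) + 1) * x j)).det ≠ 0 := by
  have cos_injOn : InjOn cos (Ioo 0 π) := injOn_cos.mono Ioo_subset_Icc_self
  exact (sin_matrix_nonsingular_general x).2 ⟨fun j => (sin_pos_of_mem_Ioo (hx j)).ne',
    fun i j hcos => hinj (cos_injOn (hx i) (hx j) hcos)⟩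
end
end

section
/- sup over t ∈ [0,T] and over all integers n ≥ 1 of |∫₀^t e^{-n²(t-s)} p(s, ωs) ds| tends to 0 as ω → ∞. In other words, the estimate ∫₀^t e^{-n²(t-s)} p(s,ωs) ds = o(1), ω → ∞, holds uniformly with respect to n ≥ 1 and t ∈ [0,T]. -/
open Real Set

noncomputable section

/-! Integrating by parts against the increasing weight `s ↦ exp (-l * (t - s)) ≤ 1` bounds the
weighted integral by twice the largest primitive of `s ↦ p s (ω * s)`, uniformly in `l ≥ 0`.
To see that these primitives are uniformly small, cut `[0, t]` into pieces of length `c / ω`, where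
`c` is the period. On each piece the slow variable is almost frozen, and the frozen integrand has
integral zero; the incomplete last piece contributes `O(1 / ω)`. -/

open Filter MeasureTheory

/-- Periodicity of a function on the half-line `[0, ∞)`, with nothing assumed at negative
arguments. The fast variable of an oscillating integrand is periodic in this sense. -/
def PeriodicOnNonneg {G α : Type*} [AddMonoid G] [Preorder G] (f : G → α) (c : G) : Prop :=
  ∀ x ∈ Ici (0 : G), f (x + c) = f x

namespace PeriodicOnNonneg

lemma apply_add_nsmul {G α : Type*} [AddMonoid G] [Preorder G] [AddLeftMono G]
    {f : G → α} {c : G} (hf : PeriodicOnNonneg f c) (hc : 0 ≤ c) {x : G} (hx : 0 ≤ x) (n : ℕ) :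
    f (x + n • c) = f x := by
  induction n with
  | zero => rw [zero_nsmul, add_zero]
  | succ n ih => rw [succ_nsmul, ← add_assoc, hf _ (add_nonneg hx (nsmul_nonneg hc n)), ih]

lemma apply_toIcoMod {G α : Type*} [AddCommGroup G] [LinearOrder G] [IsOrderedAddMonoid G]
    [Archimedean G] {f : G → α} {c : G} (hf : PeriodicOnNonneg f c) (hc : 0 < c) {x : G}
    (hx : 0 ≤ x) : f (toIcoMod hc 0 x) = f x := by
  have hmod := toIcoMod_mem_Ico' hc x
  have hdecomp := toIcoMod_add_toIcoDiv_zsmul hc 0 x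
  have hdiv : 0 ≤ toIcoDiv hc 0 x := by
    by_contra! hneg
    have hle : toIcoDiv hc 0 x • c ≤ (-1 : ℤ) • c := zsmul_le_zsmul_left hc.le (by lia)
    rw [neg_one_zsmul] at hle
    have hlt : toIcoMod hc 0 x + toIcoDiv hc 0 x • c < c + -c := add_lt_add_of_lt_of_le hmod.2 hle
    rw [hdecomp, add_neg_cancel] at hlt
    exact hlt.not_ge hx
  obtain ⟨n, hn⟩ := Int.eq_ofNat_of_zero_le hdiv
  rw [hn, natCast_zsmul] at hdecomp
  rw [← hf.apply_add_nsmul hc.le hmod.1 n, hdecomp]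

variable {E : Type*} [NormedAddCommGroup E] [NormedSpace ℝ E] {f : ℝ → E} {c : ℝ}

lemma intervalIntegral_add_eq (hf : PeriodicOnNonneg f c) (hc : 0 < c) {a : ℝ} (ha : 0 ≤ a) :
    ∫ x in a..(a + c), f x = ∫ x in (0 : ℝ)..c, f x := by
  have hper : Function.Periodic (fun x => f (toIcoMod hc 0 x)) c := fun x => by
    simp only [toIcoMod_add_right]
  have hcongr : ∀ b : ℝ, 0 ≤ b →
      ∫ x in b..(b + c), f (toIcoMod hc 0 x) = ∫ x in b..(b + c), f x := fun b hb => by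
    refine intervalIntegral.integral_congr fun x hx => hf.apply_toIcoMod hc ?_
    rw [uIcc_of_le (le_add_of_nonneg_right hc.le)] at hx
    exact hb.trans hx.1
  rw [← hcongr a ha, hper.intervalIntegral_add_eq a 0, hcongr 0 le_rfl, zero_add]

lemma integral_comp_mul_left_eq_zero (hf : PeriodicOnNonneg f c) (hc : 0 < c)
    (hmean : ∫ x in (0 : ℝ)..c, f x = 0) {ω a : ℝ} (hω : 0 < ω) (ha : 0 ≤ a) :
    ∫ s in a..(a + c / ω), f (ω * s) = 0 := by
  rw [intervalIntegral.integral_comp_mul_left f hω.ne', mul_add, mul_div_cancel₀ c hω.ne',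
    hf.intervalIntegral_add_eq hc (mul_nonneg hω.le ha), hmean, smul_zero]

end PeriodicOnNonneg

section UniformBounds

variable {X E : Type*} {f : X → ℝ → E} {K : Set X} {c : ℝ}

lemma exists_norm_le_of_periodicOnNonneg [TopologicalSpace X] [SeminormedAddGroup E]
    (hK : IsCompact K) (hc : 0 < c) (hf : ContinuousOn (Function.uncurry f) (K ×ˢ Ici 0))
    (hper : ∀ x ∈ K, PeriodicOnNonneg (f x) c) :
    ∃ M, ∀ x ∈ K, ∀ τ ∈ Ici (0 : ℝ), ‖f x τ‖ ≤ M := by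
  obtain ⟨M, hM⟩ := (hK.prod isCompact_Icc).exists_bound_of_continuousOn
    (hf.mono (prod_mono_right (Icc_subset_Ici_self : Icc 0 c ⊆ Ici 0)))
  refine ⟨M, fun x hx τ hτ => ?_⟩
  rw [← (hper x hx).apply_toIcoMod hc hτ]
  exact hM (x, _) ⟨hx, Ico_subset_Icc_self (toIcoMod_mem_Ico' hc τ)⟩

lemma exists_dist_lt_of_periodicOnNonneg [PseudoMetricSpace X] [PseudoMetricSpace E]
    (hK : IsCompact K) (hc : 0 < c) (hf : ContinuousOn (Function.uncurry f) (K ×ˢ Ici 0))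
    (hper : ∀ x ∈ K, PeriodicOnNonneg (f x) c) {ε : ℝ} (hε : 0 < ε) :
    ∃ η > 0, ∀ x ∈ K, ∀ y ∈ K, dist x y < η →
      ∀ τ ∈ Ici (0 : ℝ), dist (f x τ) (f y τ) < ε := by
  have huc := (hK.prod isCompact_Icc).uniformContinuousOn_of_continuous
    (hf.mono (prod_mono_right (Icc_subset_Ici_self : Icc 0 c ⊆ Ici 0)))
  obtain ⟨η, hη, hdist⟩ := Metric.uniformContinuousOn_iff.mp huc ε hε
  refine ⟨η, hη, fun x hx y hy hxy τ hτ => ?_⟩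
  have hmod := Ico_subset_Icc_self (toIcoMod_mem_Ico' hc τ)
  rw [← (hper x hx).apply_toIcoMod hc hτ, ← (hper y hy).apply_toIcoMod hc hτ]
  refine hdist (x, _) ⟨hx, hmod⟩ (y, _) ⟨hy, hmod⟩ ?_
  rw [Prod.dist_eq, dist_self]
  exact max_lt hxy hη

end UniformBounds

section Averaging

variable {E : Type*} {f : ℝ → ℝ → E} {c ω : ℝ}

lemma continuousOn_oscillation [TopologicalSpace E] {K : Set ℝ} (hK : K ⊆ Ici 0) (hω : 0 ≤ ω)
    (hf : ContinuousOn (Function.uncurry f) (K ×ˢ Ici 0)) :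
    ContinuousOn (fun s => f s (ω * s)) K :=
  hf.comp (f := fun s => (s, ω * s)) (by fun_prop) fun _ hs => ⟨hs, mul_nonneg hω (hK hs)⟩

variable [NormedAddCommGroup E] [NormedSpace ℝ E]

lemma norm_integral_oscillation_period_le {a δ : ℝ} (hc : 0 < c) (hω : 0 < ω) (ha : 0 ≤ a)
    (hf : ContinuousOn (Function.uncurry f) (Icc a (a + c / ω) ×ˢ Ici 0))
    (hper : PeriodicOnNonneg (f a) c) (hmean : ∫ τ in (0 : ℝ)..c, f a τ = 0)
    (hδ : ∀ s ∈ Icc a (a + c / ω), ∀ τ ∈ Ici (0 : ℝ), ‖f s τ - f a τ‖ ≤ δ) :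
    ‖∫ s in a..(a + c / ω), f s (ω * s)‖ ≤ δ * (c / ω) := by
  have hle : a ≤ a + c / ω := le_add_of_nonneg_right (div_pos hc hω).le
  have hnonneg : Icc a (a + c / ω) ⊆ Ici 0 := fun s hs => ha.trans hs.1
  have hint := (continuousOn_oscillation hnonneg hω.le hf).intervalIntegrable_of_Icc
    (μ := volume) hle
  have hfrozen : ContinuousOn (Function.uncurry fun _ => f a) (Icc a (a + c / ω) ×ˢ Ici 0) :=
    hf.comp (f := fun q : ℝ × ℝ => (a, q.2)) (by fun_prop) fun q hq => ⟨left_mem_Icc.mpr hle, hq.2⟩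
  have hint' := (continuousOn_oscillation hnonneg hω.le hfrozen).intervalIntegrable_of_Icc
    (μ := volume) hle
  calc ‖∫ s in a..(a + c / ω), f s (ω * s)‖
      = ‖∫ s in a..(a + c / ω), (f s (ω * s) - f a (ω * s))‖ := by
        rw [intervalIntegral.integral_sub hint hint',
          hper.integral_comp_mul_left_eq_zero hc hmean hω ha, sub_zero]
    _ ≤ δ * |a + c / ω - a| := by
        refine intervalIntegral.norm_integral_le_of_norm_le_const fun s hs => ?_
        have hs' : s ∈ Icc a (a + c / ω) := Ioc_subset_Icc_self (uIoc_of_le hle ▸ hs)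
        exact hδ s hs' _ (mul_nonneg hω.le (hnonneg hs'))
    _ = δ * (c / ω) := by rw [add_sub_cancel_left, abs_of_pos (div_pos hc hω)]

lemma norm_integral_oscillation_nat_mul_period_le {δ : ℝ} (hc : 0 < c) (hω : 0 < ω) (N : ℕ)
    (hf : ContinuousOn (Function.uncurry f) (Icc 0 (N * (c / ω)) ×ˢ Ici 0))
    (hper : ∀ s ∈ Icc 0 (N * (c / ω)), PeriodicOnNonneg (f s) c)
    (hmean : ∀ s ∈ Icc 0 (N * (c / ω)), ∫ τ in (0 : ℝ)..c, f s τ = 0)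
    (hδ : ∀ s ∈ Icc 0 (N * (c / ω)), ∀ s' ∈ Icc 0 (N * (c / ω)), dist s s' ≤ c / ω →
      ∀ τ ∈ Ici (0 : ℝ), ‖f s τ - f s' τ‖ ≤ δ) :
    ‖∫ s in (0 : ℝ)..(N * (c / ω)), f s (ω * s)‖ ≤ δ * (N * (c / ω)) := by
  set h := c / ω
  have hpos : 0 < h := div_pos hc hω
  have hsucc : ∀ k : ℕ, ((k + 1 : ℕ) : ℝ) * h = k * h + h := fun k => by push_cast; ring
  have hstart : ∀ k : ℕ, 0 ≤ k * h := fun k => by positivity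
  have hpiece : ∀ k < N, Icc (k * h) (k * h + h) ⊆ Icc 0 (N * h) := fun k hk =>
    Icc_subset_Icc (hstart k) (hsucc k ▸ by gcongr; exact hk)
  have hbound : ∀ k < N, ‖∫ s in (k * h)..((k + 1 : ℕ) * h), f s (ω * s)‖ ≤ δ * h := by
    intro k hk
    have hmem := hpiece k hk (left_mem_Icc.mpr (le_add_of_nonneg_right hpos.le))
    rw [hsucc]
    refine norm_integral_oscillation_period_le hc hω (hstart k)
      (hf.mono (prod_mono_left (hpiece k hk))) (hper _ hmem) (hmean _ hmem) fun s hs => ?_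
    refine hδ s (hpiece k hk hs) _ hmem ?_
    rw [Real.dist_eq, abs_of_nonneg (sub_nonneg.mpr hs.1)]
    exact sub_le_iff_le_add'.mpr hs.2
  have hsum := intervalIntegral.sum_integral_adjacent_intervals (a := fun k : ℕ => (k : ℝ) * h)
    (f := fun s => f s (ω * s)) (n := N) (μ := volume) fun k hk => by
      simp only [hsucc]
      exact ((continuousOn_oscillation Icc_subset_Ici_self hω.le hf).mono
        (hpiece k hk)).intervalIntegrable_of_Icc (le_add_of_nonneg_right hpos.le)
  rw [Nat.cast_zero, zero_mul] at hsum
  calc ‖∫ s in (0 : ℝ)..(N * h), f s (ω * s)‖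
      ≤ ∑ _k ∈ Finset.range N, δ * h := by
        rw [← hsum]
        exact norm_sum_le_of_le _ fun k hk => hbound k (Finset.mem_range.mp hk)
    _ = δ * (N * h) := by
        rw [Finset.sum_const, Finset.card_range, nsmul_eq_mul, mul_left_comm]

lemma norm_integral_oscillation_le {t δ M : ℝ} (hc : 0 < c) (hω : 0 < ω) (ht : 0 ≤ t)
    (hf : ContinuousOn (Function.uncurry f) (Icc 0 t ×ˢ Ici 0))
    (hper : ∀ s ∈ Icc 0 t, PeriodicOnNonneg (f s) c)
    (hmean : ∀ s ∈ Icc 0 t, ∫ τ in (0 : ℝ)..c, f s τ = 0)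
    (hM : ∀ s ∈ Icc 0 t, ∀ τ ∈ Ici (0 : ℝ), ‖f s τ‖ ≤ M)
    (hδ : ∀ s ∈ Icc 0 t, ∀ s' ∈ Icc 0 t, dist s s' ≤ c / ω →
      ∀ τ ∈ Ici (0 : ℝ), ‖f s τ - f s' τ‖ ≤ δ) :
    ‖∫ s in (0 : ℝ)..t, f s (ω * s)‖ ≤ δ * t + M * (c / ω) := by
  have hpos : 0 < c / ω := div_pos hc hω
  have hzero : (0 : ℝ) ∈ Icc 0 t := left_mem_Icc.mpr ht
  have hM0 : 0 ≤ M := (norm_nonneg _).trans (hM 0 hzero 0 self_mem_Ici)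
  have hδ0 : 0 ≤ δ :=
    (norm_nonneg _).trans (hδ 0 hzero 0 hzero (by rw [dist_self]; exact hpos.le) 0 self_mem_Ici)
  obtain ⟨N, hN, hN'⟩ : ∃ N : ℕ, N * (c / ω) ≤ t ∧ t < (N + 1) * (c / ω) :=
    ⟨⌊t / (c / ω)⌋₊, (le_div_iff₀ hpos).mp (Nat.floor_le (div_nonneg ht hpos.le)),
      (div_lt_iff₀ hpos).mp (Nat.lt_floor_add_one _)⟩
  have hN0 : 0 ≤ N * (c / ω) := by positivity
  have hsub : Icc 0 (N * (c / ω)) ⊆ Icc 0 t := Icc_subset_Icc_right hN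
  have hcont := continuousOn_oscillation Icc_subset_Ici_self hω.le hf
  have hperiods : ‖∫ s in (0 : ℝ)..(N * (c / ω)), f s (ω * s)‖ ≤ δ * (N * (c / ω)) :=
    norm_integral_oscillation_nat_mul_period_le hc hω N (hf.mono (prod_mono_left hsub))
      (fun s hs => hper s (hsub hs)) (fun s hs => hmean s (hsub hs))
      fun s hs s' hs' => hδ s (hsub hs) s' (hsub hs')
  have hrest : ‖∫ s in (N * (c / ω))..t, f s (ω * s)‖ ≤ M * |t - N * (c / ω)| := by
    refine intervalIntegral.norm_integral_le_of_norm_le_const fun s hs => ?_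
    rw [uIoc_of_le hN] at hs
    have hs0 : 0 ≤ s := hN0.trans hs.1.le
    exact hM s ⟨hs0, hs.2⟩ _ (mul_nonneg hω.le hs0)
  calc ‖∫ s in (0 : ℝ)..t, f s (ω * s)‖
      ≤ δ * (N * (c / ω)) + M * |t - N * (c / ω)| := by
        rw [← intervalIntegral.integral_add_adjacent_intervals
          ((hcont.mono hsub).intervalIntegrable_of_Icc hN0)
          ((hcont.mono (Icc_subset_Icc_left hN0)).intervalIntegrable_of_Icc hN)]
        exact norm_add_le_of_le hperiods hrest
    _ ≤ δ * t + M * (c / ω) := by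
        rw [abs_of_nonneg (sub_nonneg.mpr hN)]
        gcongr
        linarith

theorem eventually_norm_integral_oscillation_le {T : ℝ} (hc : 0 < c)
    (hf : ContinuousOn (Function.uncurry f) (Icc 0 T ×ˢ Ici 0))
    (hper : ∀ s ∈ Icc 0 T, PeriodicOnNonneg (f s) c)
    (hmean : ∀ s ∈ Icc 0 T, ∫ τ in (0 : ℝ)..c, f s τ = 0) {ε : ℝ} (hε : 0 < ε) :
    ∀ᶠ ω in atTop, ∀ t ∈ Icc 0 T, ‖∫ s in (0 : ℝ)..t, f s (ω * s)‖ ≤ ε := by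
  obtain ⟨M, hM⟩ := exists_norm_le_of_periodicOnNonneg isCompact_Icc hc hf hper
  set δ := ε / 2 / (|T| + 1)
  have hδ : 0 < δ := by positivity
  obtain ⟨η, hη, hdist⟩ := exists_dist_lt_of_periodicOnNonneg isCompact_Icc hc hf hper hδ
  have hperiod : Tendsto (fun ω : ℝ => c / ω) atTop (nhds 0) := tendsto_id.const_div_atTop c
  have hMperiod : Tendsto (fun ω : ℝ => M * (c / ω)) atTop (nhds 0) := by
    simpa only [mul_zero] using hperiod.const_mul M
  filter_upwards [eventually_gt_atTop 0, hperiod.eventually_lt_const hη,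
    hMperiod.eventually_le_const (half_pos hε)] with ω hω hωη hωM t ht
  have hsub : Icc 0 t ⊆ Icc 0 T := Icc_subset_Icc_right ht.2
  have hδt : δ * t ≤ ε / 2 := calc
    δ * t ≤ δ * (|T| + 1) := by gcongr; linarith [ht.2, le_abs_self T]
    _ = ε / 2 := div_mul_cancel₀ _ (by positivity)
  have hbound := norm_integral_oscillation_le hc hω ht.1 (hf.mono (prod_mono_left hsub))
    (fun s hs => hper s (hsub hs)) (fun s hs => hmean s (hsub hs)) (fun s hs => hM s (hsub hs))
    fun s hs s' hs' hss' τ hτ => by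
      rw [← dist_eq_norm]
      exact (hdist s (hsub hs) s' (hsub hs') (hss'.trans_lt hωη) τ hτ).le
  linarith

end Averaging

section IncreasingWeight

variable {E : Type*} [NormedAddCommGroup E] [NormedSpace ℝ E] [CompleteSpace E]
  {g : ℝ → E} {a b d : ℝ}

lemma integral_smul_eq_sub_integral_deriv_smul {u u' : ℝ → ℝ} (hab : a ≤ b)
    (huc : ContinuousOn u (Icc a b)) (hu : ∀ x ∈ Ioo a b, HasDerivAt u (u' x) x)
    (hu' : IntervalIntegrable u' volume a b) (hg : ContinuousOn g (Icc a b)) :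
    ∫ s in a..b, u s • g s =
      u b • (∫ s in a..b, g s) - ∫ x in a..b, u' x • ∫ s in a..x, g s := by
  have hgi : IntervalIntegrable g volume a b := hg.intervalIntegrable_of_Icc hab
  have hderiv : ∀ x ∈ Ioo a b, HasDerivAt (fun r => ∫ s in a..r, g s) (g x) x := fun x hx =>
    intervalIntegral.integral_hasDerivAt_right
      ((hg.mono (Icc_subset_Icc_right hx.2.le)).intervalIntegrable_of_Icc hx.1.le)
      ((hg.mono Ioo_subset_Icc_self).stronglyMeasurableAtFilter isOpen_Ioo x hx)
      (hg.continuousAt (Icc_mem_nhds hx.1 hx.2))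
  have hparts := intervalIntegral.integral_smul_deriv_eq_deriv_smul_of_hasDerivAt
    (uIcc_of_le hab ▸ huc)
    (intervalIntegral.continuousOn_primitive_interval' hgi left_mem_uIcc)
    (by rwa [min_eq_left hab, max_eq_right hab]) (by rwa [min_eq_left hab, max_eq_right hab])
    hu' hgi
  rwa [intervalIntegral.integral_same, smul_zero, sub_zero] at hparts

lemma norm_integral_smul_le_of_deriv_nonneg {u u' : ℝ → ℝ} (hab : a ≤ b)
    (huc : ContinuousOn u (Icc a b)) (hu : ∀ x ∈ Ioo a b, HasDerivAt u (u' x) x)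
    (hu' : ∀ x ∈ Ioo a b, 0 ≤ u' x) (hub : 0 ≤ u b) (hg : ContinuousOn g (Icc a b))
    (hd : ∀ x ∈ Icc a b, ‖∫ s in a..x, g s‖ ≤ d) :
    ‖∫ s in a..b, u s • g s‖ ≤ (2 * u b - u a) * d := by
  have hu'i : IntervalIntegrable u' volume a b :=
    intervalIntegral.intervalIntegrable_deriv_of_nonneg (uIcc_of_le hab ▸ huc)
      (by rwa [min_eq_left hab, max_eq_right hab]) (by rwa [min_eq_left hab, max_eq_right hab])
  have hvariation : ∫ x in a..b, u' x = u b - u a :=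
    intervalIntegral.integral_eq_sub_of_hasDerivAt_of_le hab huc hu hu'i
  have hboundary : ‖u b • ∫ s in a..b, g s‖ ≤ u b * d := by
    rw [norm_smul, Real.norm_of_nonneg hub]
    exact mul_le_mul_of_nonneg_left (hd b (right_mem_Icc.mpr hab)) hub
  have hbulk : ‖∫ x in a..b, u' x • ∫ s in a..x, g s‖ ≤ (u b - u a) * d := by
    rw [← hvariation, ← intervalIntegral.integral_mul_const]
    refine intervalIntegral.norm_integral_le_of_norm_le hab ?_ (hu'i.mul_const d)
    filter_upwards [Measure.ae_ne volume b] with x hxb hx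
    have hu'x : 0 ≤ u' x := hu' x ⟨hx.1, hx.2.lt_of_ne hxb⟩
    rw [norm_smul, Real.norm_of_nonneg hu'x]
    exact mul_le_mul_of_nonneg_left (hd x (Ioc_subset_Icc_self hx)) hu'x
  calc ‖∫ s in a..b, u s • g s‖
      ≤ u b * d + (u b - u a) * d := by
        rw [integral_smul_eq_sub_integral_deriv_smul hab huc hu hu'i hg]
        exact norm_sub_le_of_le hboundary hbulk
    _ = (2 * u b - u a) * d := by ring

lemma norm_integral_exp_smul_le {l : ℝ} (hl : 0 ≤ l) (hab : a ≤ b)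
    (hg : ContinuousOn g (Icc a b)) (hd : ∀ x ∈ Icc a b, ‖∫ s in a..x, g s‖ ≤ d) :
    ‖∫ s in a..b, exp (-l * (b - s)) • g s‖ ≤ 2 * d := by
  have hderiv : ∀ x, HasDerivAt (fun s => exp (-l * (b - s))) (exp (-l * (b - x)) * l) x :=
    fun x => by simpa using (((hasDerivAt_id x).const_sub b).const_mul (-l)).exp
  have hd0 : 0 ≤ d := (norm_nonneg _).trans (hd a (left_mem_Icc.mpr hab))
  calc ‖∫ s in a..b, exp (-l * (b - s)) • g s‖
      ≤ (2 * exp (-l * (b - b)) - exp (-l * (b - a))) * d :=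
        norm_integral_smul_le_of_deriv_nonneg hab
          (fun x _ => (hderiv x).continuousAt.continuousWithinAt) (fun x _ => hderiv x)
          (fun x _ => by positivity) (by positivity) hg hd
    _ ≤ 2 * d := by
        rw [sub_self, mul_zero, Real.exp_zero, mul_one]
        gcongr
        exact sub_le_self _ (exp_pos _).le

end IncreasingWeight

theorem oscillating_integral_uniform_o1_general {E : Type*} [NormedAddCommGroup E]
    [NormedSpace ℝ E] [CompleteSpace E] {T c : ℝ} {p : ℝ → ℝ → E} (hc : 0 < c)
    (hp : ContinuousOn (Function.uncurry p) (Icc 0 T ×ˢ Ici 0))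
    (hper : ∀ t ∈ Icc 0 T, PeriodicOnNonneg (p t) c)
    (hmean : ∀ t ∈ Icc 0 T, ∫ s in (0 : ℝ)..c, p t s = 0) {ε : ℝ} (hε : 0 < ε) :
    ∀ᶠ ω in atTop, ∀ l : ℝ, 0 ≤ l → ∀ t ∈ Icc 0 T,
      ‖∫ s in (0 : ℝ)..t, exp (-l * (t - s)) • p s (ω * s)‖ ≤ ε := by
  filter_upwards [eventually_ge_atTop 0,
    eventually_norm_integral_oscillation_le hc hp hper hmean (half_pos hε)]
    with ω hω hsmall l hl t ht
  have hsub : Icc 0 t ⊆ Icc 0 T := Icc_subset_Icc_right ht.2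
  have hcont := (continuousOn_oscillation Icc_subset_Ici_self hω hp).mono hsub
  calc ‖∫ s in (0 : ℝ)..t, exp (-l * (t - s)) • p s (ω * s)‖
      ≤ 2 * (ε / 2) := norm_integral_exp_smul_le hl ht.1 hcont fun r hr => hsmall r (hsub hr)
    _ = ε := mul_div_cancel₀ ε two_ne_zero

/-- The key estimate: for `p(t,τ)` continuous, 2π-periodic in `τ` with zero mean,
`∫₀^t e^{-n²(t-s)} p(s,ωs) ds = o(1)` as `ω → ∞`, uniformly in `n ≥ 1` and `t ∈ [0,T]`. -/
theorem oscillating_integral_uniform_o1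
    (T : ℝ) (hT : 0 < T) (p : ℝ → ℝ → ℝ)
    (hc : ContinuousOn (fun q : ℝ × ℝ => p q.1 q.2) (Icc 0 T ×ˢ Ici 0))
    (hper : ∀ t ∈ Icc (0:ℝ) T, ∀ τ ∈ Ici (0:ℝ), p t (τ + 2 * π) = p t τ)
    (hzero : ∀ t ∈ Icc (0:ℝ) T, (∫ s in (0:ℝ)..(2 * π), p t s) = 0) :
    ∀ ε > 0, ∃ ω₀ : ℝ, ∀ ω ≥ ω₀, ∀ n : ℕ, 1 ≤ n → ∀ t ∈ Icc (0:ℝ) T,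
      |∫ s in (0:ℝ)..t, exp (-(n:ℝ) ^ 2 * (t - s)) * p s (ω * s)| ≤ ε := fun _ hε =>
  (eventually_atTop.mp (oscillating_integral_uniform_o1_general two_pi_pos hc hper hzero hε)).imp
    fun _ hω₀ ω hω n _ => hω₀ ω hω _ (sq_nonneg (n : ℝ))
end
end
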